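/- arXiv:2108.00717 — 2 statements merged into one kernel-verified Lean document; each statement's English description precedes it below -/
import Mathlib

section
/- Let Y be a tiled surface embedded in a boundary reduced tiled surface Z. Then the BR-closure BR(Y↪Z), defined as the intersection of all intermediate boundary reduced tiled surfaces Y ↪ Y' ↪ Z, is boundary reduced and contains Y. Likewise, if Z is strongly boundary reduced, the SBR-closure SBR(Y↪Z), defined as the intersection of all intermediate strongly boundary reduced tiled surfaces Y ↪ Y' ↪ Z, is strongly boundary reduced and contains Y. -/
/-!
Formalization preamble for "Core Surfaces" (Magee–Puder).

We work with a fixed combinatorial (CW) model.  The surface `Σ_g` has one vertex,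
`2g` directed labeled edges (the label `2i` plays the role of `a_{i+1}` and `2i+1`
the role of `b_{i+1}`), and one `4g`-gon glued along `[a₁,b₁]⋯[a_g,b_g]`.

* `Gamma g` is the surface group, presented by the single relator.
* A `Complex g` is a combinatorial 2-complex with directed, labeled edges and
  2-cells given by their boundary walks; coverings of `Σ_g` are the complexes in
  which every vertex has exactly one incoming/outgoing edge of each label, every
  walk reading the relator is closed, and every closed walk reading the relator
  bounds exactly one face (`IsCovering`).  A tiled surface is a complex that
  embeds into such a covering (`IsTiledSurface`).
* Blocks, chains, boundary cycles (via the ribbon structure coming from the fixed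
  cyclic order of the `4g` half-edges around a vertex of `Σ_g`), boundary-reduced
  and strongly boundary-reduced surfaces are defined combinatorially.
* Homotopy of edge-walks is the edge-path-group homotopy: backtrack insertions and
  insertions of boundaries of (present) faces.
* `cover g J` is the covering space `J\~Σ_g` of `Σ_g` associated to a subgroup
  `J ≤ Γ_g` (vertices = right cosets), and `coreSub g J` is the core surface of
  `J`, defined exactly as in the paper: the union of all shortest representative
  cycles of essential free-homotopy classes, together with all components of the
  complement containing finitely many `4g`-gons.
-/

noncomputable section

namespace CS

/-- Signed letters over the generators `a₁,b₁,…,a_g,b_g` of `Γ_g`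
(`a_{i+1} ↦ 2i`, `b_{i+1} ↦ 2i+1`); `true` means a positive letter. -/
abbrev Letter (g : ℕ) := Fin (2 * g) × Bool

/-- The label of the `p`-th letter of the relator `[a₁,b₁][a₂,b₂]⋯[a_g,b_g]`. -/
def relLabel (g : ℕ) (p : Fin (4 * g)) : Fin (2 * g) :=
  ⟨2 * ((p : ℕ) / 4) + ((p : ℕ) % 4) % 2, by have := p.2; omega⟩

/-- The sign of the `p`-th letter of the relator. -/
def relSign (g : ℕ) (p : Fin (4 * g)) : Bool := decide ((p : ℕ) % 4 < 2)

/-- The relator `[a₁,b₁][a₂,b₂]⋯[a_g,b_g]` as a word (list of signed letters). -/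
def relatorWord (g : ℕ) : List (Letter g) :=
  (List.finRange (4 * g)).map fun p => (relLabel g p, relSign g p)

/-- The relator as an element of the free group on the `2g` generators. -/
def relatorF (g : ℕ) : FreeGroup (Fin (2 * g)) :=
  ((relatorWord g).map fun l => if l.2 then FreeGroup.of l.1 else (FreeGroup.of l.1)⁻¹).prod

/-- The surface group `Γ_g = ⟨a₁,b₁,…,a_g,b_g ∣ [a₁,b₁]⋯[a_g,b_g]⟩`. -/
abbrev Gamma (g : ℕ) := PresentedGroup ({relatorF g} : Set (FreeGroup (Fin (2 * g))))

/-- The image of a signed letter in `Γ_g`. -/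
def letterG {g : ℕ} (l : Letter g) : Gamma g :=
  if l.2 then PresentedGroup.of l.1 else (PresentedGroup.of l.1)⁻¹

/-- The image of a word in `Γ_g`. -/
def wordG {g : ℕ} (w : List (Letter g)) : Gamma g := (w.map letterG).prod

/-- `ℓ(γ^{Γ_g})`: the minimal length of a word in the generators representing the
conjugacy class of `γ` in `Γ_g`. -/
def conjLen {g : ℕ} (γ : Gamma g) : ℕ :=
  sInf {n | ∃ w : List (Letter g), w.length = n ∧ ∃ x : Gamma g, x * wordG w * x⁻¹ = γ}

/-! ### Half-edge positions around a vertex of `Σ_g`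

The `4g` half-edges around the vertex `o` of `Σ_g` come in the (clockwise) cyclic
order `a₁`-out, `b₁`-in, `a₁`-in, `b₁`-out, `a₂`-out, `b₂`-in, `a₂`-in, `b₂`-out, …
-/

/-- Position of the outgoing `ℓ`-labeled half-edge in the cyclic order. -/
def posOut {g : ℕ} (ℓ : Fin (2 * g)) : ℕ :=
  if (ℓ : ℕ) % 2 = 0 then 2 * (ℓ : ℕ) else 2 * (ℓ : ℕ) + 1

/-- Position of the incoming `ℓ`-labeled half-edge in the cyclic order. -/
def posIn {g : ℕ} (ℓ : Fin (2 * g)) : ℕ :=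
  if (ℓ : ℕ) % 2 = 0 then 2 * (ℓ : ℕ) + 2 else 2 * (ℓ : ℕ) - 1

/-- The position of the half-edge through which a traversal of a dart with signed
letter `s` *arrives* at its terminal vertex. -/
def posArr {g : ℕ} (s : Letter g) : ℕ := if s.2 then posIn s.1 else posOut s.1

/-- The position of the half-edge through which a traversal of a dart with signed
letter `s` *leaves* its initial vertex. -/
def posLv {g : ℕ} (s : Letter g) : ℕ := if s.2 then posOut s.1 else posIn s.1

/-- The number of half-edges strictly between the arrival half-edge of `s` and the
departure half-edge of `t`, in the clockwise cyclic order of the `4g` half-edges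
around a vertex. -/
def gapN {g : ℕ} (s t : Letter g) : ℕ := (posLv t + 4 * g - (posArr s + 1)) % (4 * g)

/-! ### Combinatorial complexes -/

/-- A combinatorial at-most-2-dimensional CW-complex with directed edges labeled by
the generators of `Γ_g`, and 2-cells recorded by their boundary walks (lists of
darts, i.e. edges with a direction of traversal). -/
structure Complex (g : ℕ) where
  V : Type
  E : Type
  F : Type
  src : E → V
  dst : E → V
  lab : E → Fin (2 * g)
  bdry : F → List (E × Bool)

namespace Complex

variable {g : ℕ} (Y : Complex g)

/-- Darts: edges together with a direction of traversal (`true` = forward). -/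
abbrev D := Y.E × Bool

/-- The initial vertex of a dart. -/
def dTail (d : Y.D) : Y.V := if d.2 then Y.src d.1 else Y.dst d.1

/-- The terminal vertex of a dart. -/
def dHead (d : Y.D) : Y.V := if d.2 then Y.dst d.1 else Y.src d.1

/-- The reversal of a dart. -/
def dRev (d : Y.D) : Y.D := (d.1, !d.2)

/-- The signed letter read by a dart. -/
def dLet (d : Y.D) : Letter g := (Y.lab d.1, d.2)

/-- The word read along a list of darts. -/
def wordOf (l : List Y.D) : List (Letter g) := l.map Y.dLet

/-- The reversed walk. -/
def revW (l : List Y.D) : List Y.D := (l.map Y.dRev).reverse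

/-- `WalkFrom u v l` : `l` is a walk (edge-path) from `u` to `v`. -/
inductive WalkFrom : Y.V → Y.V → List Y.D → Prop
  | nil (v : Y.V) : WalkFrom v v []
  | cons (d : Y.D) {v : Y.V} {l : List Y.D} :
      WalkFrom (Y.dHead d) v l → WalkFrom (Y.dTail d) v (d :: l)

/-- All darts of `l` use edges from the set `sE`. -/
def InSet (sE : Set Y.E) (l : List Y.D) : Prop := ∀ d ∈ l, d.1 ∈ sE

/-- Two darts are adjacent (can be traversed consecutively). -/
def adj (d d' : Y.D) : Prop := Y.dHead d = Y.dTail d'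

/-- A nonempty closed walk. -/
def IsCycle (c : List Y.D) : Prop := c ≠ [] ∧ ∃ v, Y.WalkFrom v v c

/-- **P1**: at most one incoming and at most one outgoing `ℓ`-labeled edge at every
vertex, for every label `ℓ`. -/
def P1 : Prop :=
  (∀ e e' : Y.E, Y.src e = Y.src e' → Y.lab e = Y.lab e' → e = e') ∧
  (∀ e e' : Y.E, Y.dst e = Y.dst e' → Y.lab e = Y.lab e' → e = e')

/-- **P2**: every walk reading a word equal to `1` in `Γ_g` is closed. -/
def P2 : Prop :=
  ∀ (u v : Y.V) (l : List Y.D), Y.WalkFrom u v l → wordG (Y.wordOf l) = 1 → u = v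

/-- **P3**: every 2-cell is glued along a closed walk reading the relator
`[a₁,b₁]⋯[a_g,b_g]`, and every such closed walk bounds at most one 2-cell. -/
def P3 : Prop :=
  (∀ f : Y.F, (∃ v, Y.WalkFrom v v (Y.bdry f)) ∧ Y.wordOf (Y.bdry f) = relatorWord g) ∧
  Function.Injective Y.bdry

/-- A combinatorial covering space of `Σ_g`: every vertex has exactly one outgoing
and one incoming edge of each label, every walk reading the relator is closed, and
every closed walk reading the relator bounds exactly one `4g`-gon. -/
def IsCovering : Prop :=
  Y.P1 ∧ Y.P3 ∧
  (∀ (v : Y.V) (ℓ : Fin (2 * g)), ∃ e, Y.src e = v ∧ Y.lab e = ℓ) ∧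
  (∀ (v : Y.V) (ℓ : Fin (2 * g)), ∃ e, Y.dst e = v ∧ Y.lab e = ℓ) ∧
  (∀ (u v : Y.V) (l : List Y.D), Y.WalkFrom u v l → Y.wordOf l = relatorWord g → u = v) ∧
  (∀ (v : Y.V) (l : List Y.D), Y.WalkFrom v v l → Y.wordOf l = relatorWord g →
    ∃ f, Y.bdry f = l)

end Complex

/-- A morphism of labeled complexes: maps cells to cells of the same dimension and
respects sources, targets, labels and face boundaries (equivalently, commutes with
the immersions to `Σ_g`). -/
structure Hom {g : ℕ} (Y Z : Complex g) where
  mV : Y.V → Z.V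
  mE : Y.E → Z.E
  mF : Y.F → Z.F
  hsrc : ∀ e, Z.src (mE e) = mV (Y.src e)
  hdst : ∀ e, Z.dst (mE e) = mV (Y.dst e)
  hlab : ∀ e, Z.lab (mE e) = Y.lab e
  hbdry : ∀ f, Z.bdry (mF f) = (Y.bdry f).map fun d => (mE d.1, d.2)

namespace Hom

variable {g : ℕ} {Y Z : Complex g}

/-- The induced map on darts. -/
def mD (φ : Hom Y Z) (d : Y.D) : Z.D := (φ.mE d.1, d.2)

/-- Injectivity (an embedding of complexes). -/
def Inj (φ : Hom Y Z) : Prop :=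
  Function.Injective φ.mV ∧ Function.Injective φ.mE ∧ Function.Injective φ.mF

end Hom

namespace Complex

variable {g : ℕ} (Y : Complex g)

/-- A tiled surface: a complex which embeds into a combinatorial covering space of
`Σ_g` (compatibly with directions and labels). -/
def IsTiledSurface : Prop :=
  ∃ Z : Complex g, Z.IsCovering ∧ ∃ φ : Hom Y Z, φ.Inj

/-- Connectivity of a complex (any two vertices are joined by a walk). -/
def Connected : Prop := Nonempty Y.V ∧ ∀ v w : Y.V, ∃ l, Y.WalkFrom v w l

/-! ### Blocks and chains -/

/-- A block: a nonempty walk such that successive darts have no half-edges between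
them (hence it reads a subword of the cyclic relator, of length at most `4g`). -/
def IsBlock (l : List Y.D) : Prop :=
  l ≠ [] ∧ l.length ≤ 4 * g ∧
  List.Chain' (fun d d' => Y.adj d d' ∧ gapN (Y.dLet d) (Y.dLet d') = 0) l

/-- Two blocks are consecutive: concatenation is a walk and there is exactly one
half-edge between the last dart of the first and the first dart of the second. -/
def chainStep (b b' : List Y.D) : Prop :=
  ∃ d d', b.getLast? = some d ∧ b'.head? = some d' ∧ Y.adj d d' ∧
    gapN (Y.dLet d) (Y.dLet d') = 1

/-- A chain: a nonempty sequence of consecutive blocks. -/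
def IsChain (bs : List (List Y.D)) : Prop :=
  bs ≠ [] ∧ (∀ b ∈ bs, Y.IsBlock b) ∧ List.Chain' Y.chainStep bs

/-- A cyclic chain: a chain whose blocks pave an entire cycle. -/
def IsCyclicChain (bs : List (List Y.D)) : Prop :=
  Y.IsChain bs ∧ ∃ b b', bs.getLast? = some b ∧ bs.head? = some b' ∧ Y.chainStep b b'

/-- A long chain: a chain of consecutive blocks of lengths `2g, 2g−1, …, 2g−1, 2g`. -/
def IsLongChain (bs : List (List Y.D)) : Prop :=
  Y.IsChain bs ∧ ∃ k, bs.map List.length = 2 * g :: (List.replicate k (2 * g - 1) ++ [2 * g])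

/-- A half-chain: a cyclic chain all of whose blocks have length `2g − 1`. -/
def IsHalfChain (bs : List (List Y.D)) : Prop :=
  Y.IsCyclicChain bs ∧ ∀ b ∈ bs, b.length = 2 * g - 1

/-! ### Boundary cycles of the thick version (relative to sets of present edges and
faces), via the ribbon structure -/

/-- `nextD sE d d'`: among darts (with edge in `sE`) leaving the head of `d`, the
dart `d'` is the first one in clockwise order after the arrival half-edge of `d`.
This is the successor map whose orbits trace the boundary components of the thick
version of the ribbon graph. -/
def nextD (sE : Set Y.E) (d d' : Y.D) : Prop :=
  d'.1 ∈ sE ∧ Y.adj d d' ∧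
  ∀ d'' : Y.D, d''.1 ∈ sE → Y.adj d d'' →
    gapN (Y.dLet d) (Y.dLet d') ≤ gapN (Y.dLet d) (Y.dLet d'')

/-- The corner between the consecutive darts `d, d'` is filled by a face from `sF`. -/
def faceStep (sF : Set Y.F) (d d' : Y.D) : Prop :=
  ∃ f ∈ sF, [d, d'] <:+: (Y.bdry f ++ Y.bdry f)

/-- One step along the boundary of the thick version. -/
def bStep (sE : Set Y.E) (sF : Set Y.F) (d d' : Y.D) : Prop :=
  d.1 ∈ sE ∧ Y.nextD sE d d' ∧ ¬ Y.faceStep sF d d'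

/-- A (finite segment of a) boundary cycle of the thick version. -/
def BPath (sE : Set Y.E) (sF : Set Y.F) (l : List Y.D) : Prop :=
  l ≠ [] ∧ Y.InSet sE l ∧ List.Chain' (Y.bStep sE sF) l

/-- A (finite) boundary cycle of the thick version. -/
def BCycle (sE : Set Y.E) (sF : Set Y.F) (l : List Y.D) : Prop :=
  Y.BPath sE sF l ∧ ∃ d d', l.getLast? = some d ∧ l.head? = some d' ∧ Y.bStep sE sF d d'

/-- A dart lying on the boundary of the thick version. -/
def IsBDart (sE : Set Y.E) (sF : Set Y.F) (d : Y.D) : Prop :=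
  d.1 ∈ sE ∧ ∃ d', Y.nextD sE d d' ∧ ¬ Y.faceStep sF d d'

/-- Boundary reduced: no boundary cycle contains a long block (length `≥ 2g+1`) or
a long chain. -/
def BoundaryReduced (sE : Set Y.E) (sF : Set Y.F) : Prop :=
  (∀ l, Y.BPath sE sF l → ¬ (Y.IsBlock l ∧ 2 * g + 1 ≤ l.length)) ∧
  (∀ bs, Y.IsLongChain bs → ¬ Y.BPath sE sF bs.flatten)

/-- Strongly boundary reduced: no boundary cycle contains a half-block (length
exactly `2g`) or a half-chain. -/
def StronglyBoundaryReduced (sE : Set Y.E) (sF : Set Y.F) : Prop :=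
  (∀ l, Y.BPath sE sF l → ¬ (Y.IsBlock l ∧ l.length = 2 * g)) ∧
  (∀ bs, Y.IsHalfChain bs → ¬ Y.BCycle sE sF bs.flatten)

/-! ### Combinatorial homotopy of walks -/

/-- A closed walk traversing the boundary of a face from `sF` (in either direction,
starting anywhere). -/
def faceLoop (sF : Set Y.F) (b : List Y.D) : Prop :=
  ∃ f ∈ sF, ∃ n, b = (Y.bdry f).rotate n ∨ b = Y.revW ((Y.bdry f).rotate n)

/-- Elementary homotopy move: insertion of a backtrack or of a face boundary. -/
def elemMove (sE : Set Y.E) (sF : Set Y.F) (l l' : List Y.D) : Prop :=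
  (∃ (l₁ l₂ : List Y.D) (d : Y.D), d.1 ∈ sE ∧ l = l₁ ++ l₂ ∧ l' = l₁ ++ d :: Y.dRev d :: l₂) ∨
  (∃ l₁ l₂ b, Y.faceLoop sF b ∧ l = l₁ ++ l₂ ∧ l' = l₁ ++ b ++ l₂)

/-- Homotopy (rel endpoints) of walks from `u` to `v`, inside the subcomplex with
edge set `sE` and face set `sF`. -/
def Homotopic (sE : Set Y.E) (sF : Set Y.F) (u v : Y.V) (c c' : List Y.D) : Prop :=
  Relation.EqvGen
    (fun a b =>
      Y.WalkFrom u v a ∧ Y.WalkFrom u v b ∧ Y.InSet sE a ∧ Y.InSet sE b ∧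
        (Y.elemMove sE sF a b ∨ Y.elemMove sE sF b a)) c c'

/-- A closed walk which is null-homotopic. -/
def NullHomotopic (sE : Set Y.E) (sF : Set Y.F) (c : List Y.D) : Prop :=
  ∃ v, Y.WalkFrom v v c ∧ Y.Homotopic sE sF v v c []

/-- An essential cycle: a nonempty closed walk which is not null-homotopic. -/
def Essential (sE : Set Y.E) (sF : Set Y.F) (c : List Y.D) : Prop :=
  Y.IsCycle c ∧ Y.InSet sE c ∧ ¬ Y.NullHomotopic sE sF c

/-- Free homotopy of closed walks. -/
def FreelyHomotopic (sE : Set Y.E) (sF : Set Y.F) (c c' : List Y.D) : Prop :=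
  ∃ u v q, Y.WalkFrom u u c ∧ Y.WalkFrom v v c' ∧ Y.WalkFrom u v q ∧
    Y.InSet sE q ∧ Y.InSet sE c ∧ Y.InSet sE c' ∧
    Y.Homotopic sE sF u u c (q ++ c' ++ Y.revW q)

/-- `c` is a shortest representative of its free homotopy class. -/
def ShortestRep (sE : Set Y.E) (sF : Set Y.F) (c : List Y.D) : Prop :=
  ∀ c', Y.FreelyHomotopic sE sF c c' → c.length ≤ c'.length

end Complex

/-- `s` occurs as a contiguous subword of the cyclic word `c`. -/
def cycContains {α : Type*} (c s : List α) : Prop :=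
  s ≠ [] ∧ s.length ≤ c.length ∧ s <:+: (c ++ c)

namespace Complex

variable {g : ℕ} (Y : Complex g)

/-- The cycle `c` contains no long block and no long chain. -/
def NoLongBlockOrChainCyc (c : List Y.D) : Prop :=
  (∀ s, cycContains c s → ¬ (Y.IsBlock s ∧ 2 * g + 1 ≤ s.length)) ∧
  (∀ bs, Y.IsLongChain bs → ¬ cycContains c bs.flatten)

/-- A (cyclically) non-backtracking cycle. -/
def NonBacktrackingCyc (c : List Y.D) : Prop :=
  ¬ ∃ d : Y.D, cycContains c [d, Y.dRev d]

/-- A cycle which is essential and a shortest representative of its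
free homotopy class. -/
def GoodCycle (c : List Y.D) : Prop :=
  Y.IsCycle c ∧ Y.Essential Set.univ Set.univ c ∧ Y.ShortestRep Set.univ Set.univ c

/-! ### Cells and components of complements -/

/-- The cells of a complex. -/
def Cell := Y.V ⊕ Y.E ⊕ Y.F

def vCell (v : Y.V) : Y.Cell := Sum.inl v
def eCell (e : Y.E) : Y.Cell := Sum.inr (Sum.inl e)
def fCell (f : Y.F) : Y.Cell := Sum.inr (Sum.inr f)

/-- Basic incidence of (open) cells. -/
def inc0 : Y.Cell → Y.Cell → Prop := fun c c' =>
  match c, c' with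
  | Sum.inl v, Sum.inr (Sum.inl e) => Y.src e = v ∨ Y.dst e = v
  | Sum.inl v, Sum.inr (Sum.inr f) => ∃ d ∈ Y.bdry f, Y.dTail d = v
  | Sum.inr (Sum.inl e), Sum.inr (Sum.inr f) => ∃ b, (e, b) ∈ Y.bdry f
  | _, _ => False

/-- Symmetrized incidence of cells. -/
def incid (c c' : Y.Cell) : Prop := Y.inc0 c c' ∨ Y.inc0 c' c

end Complex

/-- A triple of subsets of the cells of a complex `Y` (a prospective subcomplex). -/
structure SubC {g : ℕ} (Y : Complex g) where
  sV : Set Y.V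
  sE : Set Y.E
  sF : Set Y.F

namespace SubC

variable {g : ℕ} {Y : Complex g}

/-- `S` is an actual subcomplex: closed under taking boundaries of cells. -/
def IsSub (S : SubC Y) : Prop :=
  (∀ e ∈ S.sE, Y.src e ∈ S.sV ∧ Y.dst e ∈ S.sV) ∧
  (∀ f ∈ S.sF, ∀ d ∈ Y.bdry f, d.1 ∈ S.sE)

/-- Containment of subcomplexes. -/
def le (S T : SubC Y) : Prop := S.sV ⊆ T.sV ∧ S.sE ⊆ T.sE ∧ S.sF ⊆ T.sF

/-- Compactness: finitely many cells. -/
def Compact (S : SubC Y) : Prop := S.sV.Finite ∧ S.sE.Finite ∧ S.sF.Finite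

/-- Connectivity of the subcomplex. -/
def Connected (S : SubC Y) : Prop :=
  S.sV.Nonempty ∧ ∀ v ∈ S.sV, ∀ w ∈ S.sV, ∃ l, Y.WalkFrom v w l ∧ Y.InSet S.sE l

/-- Image of a subcomplex under a morphism. -/
def image {Z : Complex g} (φ : Hom Y Z) (S : SubC Y) : SubC Z :=
  ⟨φ.mV '' S.sV, φ.mE '' S.sE, φ.mF '' S.sF⟩

end SubC

/-- The whole complex, as a subcomplex of itself. -/
def fullSub {g : ℕ} (Y : Complex g) : SubC Y := ⟨Set.univ, Set.univ, Set.univ⟩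

namespace Complex

variable {g : ℕ} (Y : Complex g)

/-- Membership of a cell in a subcomplex. -/
def inSub (S : SubC Y) : Y.Cell → Prop := fun c =>
  match c with
  | Sum.inl v => v ∈ S.sV
  | Sum.inr (Sum.inl e) => e ∈ S.sE
  | Sum.inr (Sum.inr f) => f ∈ S.sF

/-- Reachability of cells through the open complement of the subcomplex `S`
(= lying in the same connected component of the complement). -/
def reachS (S : SubC Y) (c c' : Y.Cell) : Prop :=
  Relation.ReflTransGen (fun a b => Y.incid a b ∧ ¬ Y.inSub S a ∧ ¬ Y.inSub S b) c c'

end Complex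

/-- The closure (as a subcomplex) of the connected component of the cell `c₀` in the
complement of the subcomplex `S`. -/
def compCl {g : ℕ} (Y : Complex g) (S : SubC Y) (c₀ : Y.Cell) : SubC Y :=
  let cF : Set Y.F := {f | Y.reachS S c₀ (Y.fCell f)}
  let cE : Set Y.E :=
    {e | Y.reachS S c₀ (Y.eCell e)} ∪ {e | ∃ f ∈ cF, ∃ b, (e, b) ∈ Y.bdry f}
  let cV : Set Y.V :=
    {v | Y.reachS S c₀ (Y.vCell v)} ∪ {v | ∃ e ∈ cE, Y.src e = v ∨ Y.dst e = v}
  ⟨cV, cE, cF⟩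

/-- The subcomplex has exactly one boundary cycle (which covers all boundary darts). -/
def OneBdry {g : ℕ} (Y : Complex g) (S : SubC Y) : Prop :=
  ∃ δ, Y.BCycle S.sE S.sF δ ∧ ∀ d, Y.IsBDart S.sE S.sF d → d ∈ δ

/-- The subcomplex has exactly two (disjoint) boundary cycles, covering all
boundary darts. -/
def TwoBdry {g : ℕ} (Y : Complex g) (S : SubC Y) : Prop :=
  ∃ δ₁ δ₂, Y.BCycle S.sE S.sF δ₁ ∧ Y.BCycle S.sE S.sF δ₂ ∧ δ₁.Disjoint δ₂ ∧
    ∀ d, Y.IsBDart S.sE S.sF d → d ∈ δ₁ ∨ d ∈ δ₂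

/-- The boundary-reduced closure of `S` inside `Y`: the intersection of all
intermediate boundary reduced subcomplexes. -/
def BRcl {g : ℕ} (Y : Complex g) (S : SubC Y) : SubC Y where
  sV := ⋂ T ∈ {T : SubC Y | T.IsSub ∧ S.le T ∧ Y.BoundaryReduced T.sE T.sF}, T.sV
  sE := ⋂ T ∈ {T : SubC Y | T.IsSub ∧ S.le T ∧ Y.BoundaryReduced T.sE T.sF}, T.sE
  sF := ⋂ T ∈ {T : SubC Y | T.IsSub ∧ S.le T ∧ Y.BoundaryReduced T.sE T.sF}, T.sF

/-- The strongly-boundary-reduced closure of `S` inside `Y`. -/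
def SBRcl {g : ℕ} (Y : Complex g) (S : SubC Y) : SubC Y where
  sV := ⋂ T ∈ {T : SubC Y | T.IsSub ∧ S.le T ∧ Y.StronglyBoundaryReduced T.sE T.sF}, T.sV
  sE := ⋂ T ∈ {T : SubC Y | T.IsSub ∧ S.le T ∧ Y.StronglyBoundaryReduced T.sE T.sF}, T.sE
  sF := ⋂ T ∈ {T : SubC Y | T.IsSub ∧ S.le T ∧ Y.StronglyBoundaryReduced T.sE T.sF}, T.sF

/-- An isomorphism between the subcomplex `S` of `Y` and the subcomplex `T` of `Z`. -/
structure SubEquiv {g : ℕ} (Y : Complex g) (S : SubC Y) (Z : Complex g) (T : SubC Z) where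
  fV : Y.V → Z.V
  fE : Y.E → Z.E
  fF : Y.F → Z.F
  bijV : Set.BijOn fV S.sV T.sV
  bijE : Set.BijOn fE S.sE T.sE
  bijF : Set.BijOn fF S.sF T.sF
  hsrc : ∀ e ∈ S.sE, Z.src (fE e) = fV (Y.src e)
  hdst : ∀ e ∈ S.sE, Z.dst (fE e) = fV (Y.dst e)
  hlab : ∀ e ∈ S.sE, Z.lab (fE e) = Y.lab e
  hbdry : ∀ f ∈ S.sF, Z.bdry (fF f) = (Y.bdry f).map fun d => (fE d.1, d.2)

/-- `FunnelComponent Y S c₀`: the connected component of the cell `c₀` in the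
complement of the subcomplex `S` is a twice-punctured sphere with one funnel and
one fake-puncture.  Rendered combinatorially: the component contains infinitely
many `4g`-gons (the funnel); there is a boundary cycle `δ` of `S` adjacent to the
component, it is unique (one fake-puncture), and every closed walk inside the
closure of the component is freely homotopic there to a power of `δ` or of its
inverse (so the closure is a half-open annulus bounded by `δ`). -/
def FunnelComponent {g : ℕ} (Y : Complex g) (S : SubC Y) (c₀ : Y.Cell) : Prop :=
  {f : Y.F | Y.reachS S c₀ (Y.fCell f)}.Infinite ∧
  ∃ δ : List Y.D, Y.BCycle S.sE S.sF δ ∧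
    (∃ d ∈ δ, ∃ c', Y.incid (Y.eCell d.1) c' ∧ Y.reachS S c₀ c') ∧
    (∀ δ', Y.BCycle S.sE S.sF δ' →
      (∃ d ∈ δ', ∃ c', Y.incid (Y.eCell d.1) c' ∧ Y.reachS S c₀ c') →
      ∃ n, δ' = δ.rotate n) ∧
    (∀ (v : Y.V) (l : List Y.D), Y.WalkFrom v v l →
      Y.InSet ({e | Y.reachS S c₀ (Y.eCell e)} ∪ {e | ∃ b, (e, b) ∈ δ}) l →
      ∃ n,
        Y.FreelyHomotopic ({e | Y.reachS S c₀ (Y.eCell e)} ∪ {e | ∃ b, (e, b) ∈ δ})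
          {f | Y.reachS S c₀ (Y.fCell f)} l ((List.replicate n δ).flatten) ∨
        Y.FreelyHomotopic ({e | Y.reachS S c₀ (Y.eCell e)} ∪ {e | ∃ b, (e, b) ∈ δ})
          {f | Y.reachS S c₀ (Y.fCell f)} l ((List.replicate n (Y.revW δ)).flatten))

/-- `Y` contains a funnel: an essential cycle `δ` of `Y` cutting off an infinite
region of `Y` which is attached to the rest of `Y` only along `δ`, contains no
boundary of `Y`, and is a half-open annulus (every loop inside is freely homotopic
to a power of `δ`); i.e. an end of `Y` which is a puncture of the ambient covering. -/
def HasFunnel {g : ℕ} (Y : Complex g) : Prop :=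
  ∃ (δ : List Y.D) (sE : Set Y.E) (sF : Set Y.F),
    Y.IsCycle δ ∧ Y.Essential Set.univ Set.univ δ ∧
    (∀ d ∈ δ, d.1 ∉ sE) ∧ sE.Nonempty ∧ sF.Infinite ∧
    (∀ f ∈ sF, ∀ d ∈ Y.bdry f, d.1 ∈ sE ∨ ∃ b, (d.1, b) ∈ δ) ∧
    (∀ f : Y.F, (∃ d ∈ Y.bdry f, d.1 ∈ sE) → f ∈ sF) ∧
    (∀ d : Y.D, d.1 ∈ sE → ¬ Y.IsBDart Set.univ Set.univ d) ∧
    (∀ v : Y.V, (∃ e ∈ sE, Y.src e = v ∨ Y.dst e = v) → (∀ d ∈ δ, Y.dTail d ≠ v) →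
      ∀ e' : Y.E, (Y.src e' = v ∨ Y.dst e' = v) → e' ∈ sE) ∧
    (∀ (v : Y.V) (l : List Y.D), Y.WalkFrom v v l →
      Y.InSet (sE ∪ {e | ∃ b, (e, b) ∈ δ}) l →
      ∃ n,
        Y.FreelyHomotopic (sE ∪ {e | ∃ b, (e, b) ∈ δ}) sF l
          ((List.replicate n δ).flatten) ∨
        Y.FreelyHomotopic (sE ∪ {e | ∃ b, (e, b) ∈ δ}) sF l
          ((List.replicate n (Y.revW δ)).flatten))

/-- The fundamental group of `Y` is cyclic: some closed walk `c` generates all free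
homotopy classes of loops.  (For a connected surface this is *equivalent to NOT
having genus ≥ 1 or at least 3 boundary components/punctures*.) -/
def CyclicPi1 {g : ℕ} (Y : Complex g) : Prop :=
  ∃ c : List Y.D, ∀ (v : Y.V) (l : List Y.D), Y.WalkFrom v v l →
    ∃ n,
      Y.FreelyHomotopic Set.univ Set.univ l ((List.replicate n c).flatten) ∨
      Y.FreelyHomotopic Set.univ Set.univ l ((List.replicate n (Y.revW c)).flatten)

/-! ### The covering space `J\~Σ_g` and the core surface of `J` -/

/-- Right cosets `Jx` of `J` in `Γ_g` — the vertices (and faces) of `J\~Σ_g`. -/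
abbrev Cos (g : ℕ) (J : Subgroup (Gamma g)) := Quotient (QuotientGroup.rightRel J)

/-- The coset `Jx`. -/
def mkCos (g : ℕ) (J : Subgroup (Gamma g)) (x : Gamma g) : Cos g J :=
  Quotient.mk _ x

/-- Right multiplication on right cosets. -/
def rmul (g : ℕ) (J : Subgroup (Gamma g)) (x : Gamma g) : Cos g J → Cos g J :=
  Quotient.map (· * x) (by
    intro a b hab
    have h1 : b * a⁻¹ ∈ J := QuotientGroup.rightRel_apply.mp hab
    refine QuotientGroup.rightRel_apply.mpr ?_
    have h2 : b * x * (a * x)⁻¹ = b * a⁻¹ := by group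
    rw [h2]; exact h1)

/-- The walk in `J\~Σ_g` starting at a vertex and reading a given word. -/
def relWalk (g : ℕ) (J : Subgroup (Gamma g)) :
    Cos g J → List (Letter g) → List ((Cos g J × Fin (2 * g)) × Bool)
  | _, [] => []
  | v, (ℓ, true) :: w =>
      ((v, ℓ), true) :: relWalk g J (rmul g J (PresentedGroup.of ℓ) v) w
  | v, (ℓ, false) :: w =>
      ((rmul g J (PresentedGroup.of ℓ)⁻¹ v, ℓ), false) ::
        relWalk g J (rmul g J (PresentedGroup.of ℓ)⁻¹ v) w

/-- The covering space `Υ = J\~Σ_g` of `Σ_g` corresponding to the subgroup `J`,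
with the CW-structure pulled back from `Σ_g`: vertices and `4g`-gons are the right
cosets of `J`, and each vertex carries one outgoing edge per label. -/
def cover (g : ℕ) (J : Subgroup (Gamma g)) : Complex g where
  V := Cos g J
  E := Cos g J × Fin (2 * g)
  F := Cos g J
  src e := e.1
  dst e := rmul g J (PresentedGroup.of e.2) e.1
  lab e := e.2
  bdry v := relWalk g J v (relatorWord g)

/-- The map `J₁\~Σ_g → J₂\~Σ_g` on vertices, for `J₁ ≤ J₂`. -/
def coverMapV {g : ℕ} {J₁ J₂ : Subgroup (Gamma g)} (h : J₁ ≤ J₂) :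
    Cos g J₁ → Cos g J₂ :=
  Quotient.map id (by
    intro a b hab
    have h1 : b * a⁻¹ ∈ J₁ := QuotientGroup.rightRel_apply.mp hab
    exact QuotientGroup.rightRel_apply.mpr (h h1))

/-- The natural covering morphism on edges. -/
def coverMapE {g : ℕ} {J₁ J₂ : Subgroup (Gamma g)} (h : J₁ ≤ J₂)
    (e : (cover g J₁).E) : (cover g J₂).E :=
  (coverMapV h e.1, e.2)

/-- The natural covering morphism on darts. -/
def coverMapD {g : ℕ} {J₁ J₂ : Subgroup (Gamma g)} (h : J₁ ≤ J₂)
    (d : (cover g J₁).D) : (cover g J₂).D :=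
  (coverMapE h d.1, d.2)

/-- The cycle `c` in `J\~Σ_g` represents the conjugacy class of `γ` in `J`
(conjugacy classes in `J` ↔ free homotopy classes of essential loops in `J\~Σ_g`). -/
def RepCls {g : ℕ} (J : Subgroup (Gamma g)) (c : List ((cover g J).D))
    (γ : Gamma g) : Prop :=
  ∃ x j : Gamma g, j ∈ J ∧
    (cover g J).WalkFrom (mkCos g J x) (mkCos g J x) c ∧
    x * wordG ((cover g J).wordOf c) * x⁻¹ = j * γ * j⁻¹

/-- Step (i) of the definition of the core surface: the edges lying on some
shortest representative cycle of an essential free homotopy class. -/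
def coreE1 (g : ℕ) (J : Subgroup (Gamma g)) : Set (cover g J).E :=
  {e | ∃ c, (cover g J).GoodCycle c ∧ ∃ b, (e, b) ∈ c}

/-- The vertices of step (i) of the definition of the core surface. -/
def coreV1 (g : ℕ) (J : Subgroup (Gamma g)) : Set (cover g J).V :=
  {v | ∃ e ∈ coreE1 g J, (cover g J).src e = v ∨ (cover g J).dst e = v}

/-- Step (i) of the definition of the core surface, as a subcomplex of `J\~Σ_g`. -/
def coreS1 (g : ℕ) (J : Subgroup (Gamma g)) : SubC (cover g J) :=
  ⟨coreV1 g J, coreE1 g J, ∅⟩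

/-- A cell of `J\~Σ_g` lying in a connected component of the complement of step (i)
which contains only finitely many `4g`-gons. -/
def coreFin (g : ℕ) (J : Subgroup (Gamma g)) (c : (cover g J).Cell) : Prop :=
  ¬ (cover g J).inSub (coreS1 g J) c ∧
  {f : (cover g J).F | (cover g J).reachS (coreS1 g J) c ((cover g J).fCell f)}.Finite

open Classical in
/-- The core surface `Core(J)` of a subgroup `J ≤ Γ_g`, as a subcomplex of
`Υ = J\~Σ_g`: (i) the union of all shortest representative cycles of essential
free homotopy classes in `Υ`, together with (ii) all connected components of the
complement containing finitely many `4g`-gons.  For the trivial subgroup it is a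
single vertex. -/
def coreSub (g : ℕ) (J : Subgroup (Gamma g)) : SubC (cover g J) :=
  if J = ⊥ then ⟨{mkCos g J 1}, ∅, ∅⟩
  else
    ⟨coreV1 g J ∪ {v | coreFin g J ((cover g J).vCell v)},
     coreE1 g J ∪ {e | coreFin g J ((cover g J).eCell e)},
     {f | coreFin g J ((cover g J).fCell f)}⟩

theorem posLv_lt {g : ℕ} (s : Letter g) : posLv s < 4 * g := by
  obtain ⟨⟨a, ha⟩, b⟩ := s
  cases b <;> simp only [posLv, posIn, posOut] <;> (split_ifs <;> simp_all <;> omega)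

theorem posArr_lt {g : ℕ} (s : Letter g) : posArr s < 4 * g := by
  obtain ⟨⟨a, ha⟩, b⟩ := s
  cases b <;> simp only [posArr, posIn, posOut] <;> (split_ifs <;> simp_all <;> omega)

theorem posLv_inj {g : ℕ} (s t : Letter g) (h : posLv s = posLv t) : s = t := by
  obtain ⟨⟨a, ha⟩, b⟩ := s
  obtain ⟨⟨a', ha'⟩, b'⟩ := t
  cases b <;> cases b' <;> simp only [posLv, posIn, posOut] at h <;>
    (split_ifs at h <;> simp_all <;> omega)

theorem gap_eq {g : ℕ} (s t : Letter g) (k : ℕ) (hk : k < 4 * g) :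
    gapN s t = k ↔ (posLv t = posArr s + 1 + k ∨ posLv t + 4 * g = posArr s + 1 + k) := by
  have h1 := posLv_lt t
  have h2 := posArr_lt s
  unfold gapN
  by_cases h : posLv t + 4 * g - (posArr s + 1) < 4 * g
  · rw [Nat.mod_eq_of_lt h]; omega
  · have : posLv t + 4 * g - (posArr s + 1) = (posLv t - (posArr s + 1)) + 4 * g := by omega
    rw [this, Nat.add_mod_right, Nat.mod_eq_of_lt (by omega)]; omega

/-- the `i`-th letter of the cyclic relator -/
def rl (g : ℕ) (p : Fin (4 * g)) : Letter g := (relLabel g p, relSign g p)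

theorem rl_inj (g : ℕ) (p q : Fin (4 * g)) (h : rl g p = rl g q) : p = q := by
  obtain ⟨p, hp⟩ := p
  obtain ⟨q, hq⟩ := q
  simp only [rl, relLabel, relSign, Prod.mk.injEq, Fin.mk.injEq, decide_eq_decide] at h
  ext
  simp only
  omega

theorem posLv_rl (g : ℕ) (p : Fin (4 * g)) :
    posLv (rl g p) = 4 * ((p : ℕ) / 4) + (4 - (p : ℕ) % 4) % 4 := by
  obtain ⟨p, hp⟩ := p
  have : p % 4 = 0 ∨ p % 4 = 1 ∨ p % 4 = 2 ∨ p % 4 = 3 := by omega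
  rcases this with h | h | h | h <;>
    simp [posLv, posIn, posOut, rl, relLabel, relSign, h] <;> omega

theorem posArr_rl (g : ℕ) (p : Fin (4 * g)) :
    posArr (rl g p) = 4 * ((p : ℕ) / 4) + (6 - (p : ℕ) % 4) % 4 := by
  obtain ⟨p, hp⟩ := p
  have : p % 4 = 0 ∨ p % 4 = 1 ∨ p % 4 = 2 ∨ p % 4 = 3 := by omega
  rcases this with h | h | h | h <;>
    simp [posArr, posIn, posOut, rl, relLabel, relSign, h] <;> omega

theorem gap_rl (g : ℕ) (p q : Fin (4 * g)) (h : (q : ℕ) = ((p : ℕ) + 1) % (4 * g)) :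
    gapN (rl g p) (rl g q) = 0 := by
  rw [gap_eq _ _ _ (by have := p.2; omega), posLv_rl, posArr_rl]
  have hp := p.2
  by_cases h' : (p : ℕ) + 1 < 4 * g
  · rw [Nat.mod_eq_of_lt h'] at h; omega
  · have : (p : ℕ) + 1 = 4 * g := by omega
    rw [this, Nat.mod_self] at h
    omega

namespace Complex

variable {g : ℕ} (Z : Complex g)

theorem walk_adj {Z : Complex g} {u v : Z.V} {l : List Z.D} (h : Z.WalkFrom u v l) :
    (∀ i (hi : i + 1 < l.length), Z.adj l[i] l[i + 1]) ∧
    (∀ (h0 : 0 < l.length), Z.dTail l[0] = u) ∧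
    (∀ (h0 : 0 < l.length), Z.dHead l[l.length - 1] = v) ∧ (l = [] → u = v) := by
  induction h with
  | nil v => simp
  | cons d hw ih =>
    rename_i v l
    obtain ⟨i1, i2, i3, i4⟩ := ih
    refine ⟨?_, by simp, ?_, by simp⟩
    · intro i hi
      cases i with
      | zero => 
        simp only [List.length_cons] at hi
        have := i2 (by omega)
        simp [Complex.adj, this]
      | succ i => simpa using i1 i (by simpa using hi)
    · intro h0
      cases l with
      | nil => simpa using i4 rfl
      | cons a l => simpa using i3 (by simp)

/-- local facts about complexes embedding in a covering -/
structure Nice : Prop where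
  uniq0 : ∀ d d' : Z.D, Z.dTail d = Z.dTail d' → posLv (Z.dLet d) = posLv (Z.dLet d') → d = d'
  face : ∀ f : Z.F, ∃ h : (Z.bdry f).length = 4 * g,
    (∀ i (hi : i < 4 * g), Z.dLet (Z.bdry f)[i] = rl g ⟨i, hi⟩) ∧
    (∀ i (hi : i < 4 * g), Z.adj (Z.bdry f)[i] ((Z.bdry f)[(i+1) % (4*g)]'(by
      rw [h]; exact Nat.mod_lt _ (by omega))))
  inj : Function.Injective Z.bdry

theorem nice (hZ : Z.IsTiledSurface) : Z.Nice := by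
  obtain ⟨W, ⟨hP1, hP3, -⟩, φ, hV, hE, hF⟩ := hZ
  have hT : ∀ d : Z.D, W.dTail (φ.mD d) = φ.mV (Z.dTail d) := by
    rintro ⟨e, b⟩; cases b <;> simp [dTail, Hom.mD, φ.hsrc, φ.hdst]
  have hH : ∀ d : Z.D, W.dHead (φ.mD d) = φ.mV (Z.dHead d) := by
    rintro ⟨e, b⟩; cases b <;> simp [dHead, Hom.mD, φ.hsrc, φ.hdst]
  have hL : ∀ d : Z.D, W.dLet (φ.mD d) = Z.dLet d := by
    intro d; simp [dLet, Hom.mD, φ.hlab]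
  have hadj : ∀ d d' : Z.D, W.adj (φ.mD d) (φ.mD d') → Z.adj d d' := by
    intro d d' h
    unfold adj at *
    rw [hH, hT] at h
    exact hV h
  have hb : ∀ f, W.bdry (φ.mF f) = (Z.bdry f).map φ.mD := φ.hbdry
  refine ⟨?_, ?_, ?_⟩
  · intro d' d'' h6 h5
    replace h5 := posLv_inj _ _ h5
    obtain ⟨e', b'⟩ := d'
    obtain ⟨e'', b''⟩ := d''
    simp only [dLet, Prod.mk.injEq] at h5
    obtain ⟨h5, rfl⟩ := h5
    congr 1
    apply hE
    cases b' <;> simp [dTail] at h6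
    · exact hP1.2 _ _ (by rw [φ.hdst, φ.hdst, h6]) (by rw [φ.hlab, φ.hlab, h5])
    · exact hP1.1 _ _ (by rw [φ.hsrc, φ.hsrc, h6]) (by rw [φ.hlab, φ.hlab, h5])
  · intro f
    obtain ⟨⟨v, hw⟩, hr⟩ := hP3.1 (φ.mF f)
    rw [hb] at hw hr
    have hw' := walk_adj hw
    have hr' : (Z.bdry f).map Z.dLet = (List.finRange (4 * g)).map (rl g) := by
      rw [wordOf, List.map_map] at hr
      rw [← show (fun x => W.dLet (φ.mD x)) = Z.dLet from funext hL]
      exact hr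
    have hlen : (Z.bdry f).length = 4 * g := by simpa using congrArg List.length hr'
    refine ⟨hlen, ?_, ?_⟩
    · intro i hi
      have := List.getElem_of_eq hr' (i := i) (by simpa [hlen] using hi)
      simpa using this
    · intro i hi
      apply hadj
      obtain ⟨w1, w2, w3, -⟩ := hw'
      simp only [List.length_map, List.getElem_map, hlen] at w1 w2 w3
      by_cases h : i + 1 < 4 * g
      · simp only [Nat.mod_eq_of_lt h]
        exact w1 i h
      · have h' : i + 1 = 4 * g := by omega
        have h'' : i = 4 * g - 1 := by omega
        simp only [h', Nat.mod_self]
        subst h''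
        exact (w3 (by omega)).trans (w2 (by omega)).symm
  · intro f f' h
    apply hF
    apply hP3.2
    rw [hb, hb, h]

/-- some face of `sF` lies to the left of `d` -/
def Fill (sF : Set Z.F) (d : Z.D) : Prop := ∃ f ∈ sF, d ∈ Z.bdry f

/-- the half-edge right after the arrival half-edge of `d` is present -/
def Nx (sE : Set Z.E) (d : Z.D) : Prop :=
  ∃ x : Z.D, x.1 ∈ sE ∧ Z.adj d x ∧ gapN (Z.dLet d) (Z.dLet x) = 0

variable {Z}

theorem Nice.uniq (hn : Z.Nice) (d d' d'' : Z.D) (h1 : Z.adj d d') (h2 : Z.adj d d'')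
    (h3 : gapN (Z.dLet d) (Z.dLet d') = 0) (h4 : gapN (Z.dLet d) (Z.dLet d'') = 0) :
    d' = d'' := by
  have hg : 0 < 4 * g := by have := (Z.lab d.1).2; omega
  rw [gap_eq _ _ _ hg] at h3 h4
  apply hn.uniq0 _ _ (h1.symm.trans h2)
  have := posLv_lt (Z.dLet d')
  have := posLv_lt (Z.dLet d'')
  omega

theorem posLv_rev (d : Z.D) : posLv (Z.dLet (Z.dRev d)) = posArr (Z.dLet d) := by
  obtain ⟨e, b⟩ := d
  cases b <;> simp [posLv, posArr, dLet, dRev]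

theorem tail_rev (d : Z.D) : Z.dTail (Z.dRev d) = Z.dHead d := by
  obtain ⟨e, b⟩ := d
  cases b <;> simp [dTail, dHead, dRev]

theorem Nice.next (hn : Z.Nice) {f : Z.F} {d : Z.D} (h : d ∈ Z.bdry f) :
    ∃ x ∈ Z.bdry f, Z.adj d x ∧ gapN (Z.dLet d) (Z.dLet x) = 0 := by
  obtain ⟨hl, h1, h2⟩ := hn.face f
  obtain ⟨i, hi, rfl⟩ := List.getElem_of_mem h
  rw [hl] at hi
  have hm : (i + 1) % (4 * g) < 4 * g := Nat.mod_lt _ (by omega)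
  refine ⟨(Z.bdry f)[(i+1) % (4*g)]'(by rw [hl]; exact hm), List.getElem_mem _, h2 i hi, ?_⟩
  rw [h1 i hi, h1 _ hm]
  exact gap_rl g _ _ rfl

theorem Nice.prev (hn : Z.Nice) {f : Z.F} {d : Z.D} (h : d ∈ Z.bdry f) :
    ∃ x ∈ Z.bdry f, Z.adj x d ∧ gapN (Z.dLet x) (Z.dLet d) = 0 := by
  obtain ⟨hl, h1, h2⟩ := hn.face f
  obtain ⟨i, hi, rfl⟩ := List.getElem_of_mem h
  rw [hl] at hi
  have hm : ∃ j, j < 4 * g ∧ (j + 1) % (4 * g) = i := by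
    by_cases h0 : i = 0
    · refine ⟨4 * g - 1, by omega, ?_⟩
      rw [show 4 * g - 1 + 1 = 4 * g by omega, Nat.mod_self, h0]
    · exact ⟨i - 1, by omega, by rw [show i - 1 + 1 = i by omega, Nat.mod_eq_of_lt hi]⟩
  obtain ⟨j, hj, rfl⟩ := hm
  refine ⟨(Z.bdry f)[j], List.getElem_mem _, h2 j hj, ?_⟩
  rw [h1 j hj, h1 _ hi]
  exact gap_rl g _ _ rfl

theorem Nice.mem_next (hn : Z.Nice) {f : Z.F} {d x : Z.D} (h : d ∈ Z.bdry f)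
    (ha : Z.adj d x) (hx : gapN (Z.dLet d) (Z.dLet x) = 0) : x ∈ Z.bdry f := by
  obtain ⟨y, hy, h1, h2⟩ := hn.next h
  rwa [hn.uniq d x y ha h1 hx h2]

theorem Nice.faceUniq (hn : Z.Nice) {f f' : Z.F} {d : Z.D} (h : d ∈ Z.bdry f)
    (h' : d ∈ Z.bdry f') : f = f' := by
  obtain ⟨hl, h1, h2⟩ := hn.face f
  obtain ⟨hl', h1', h2'⟩ := hn.face f'
  obtain ⟨i, hi, rfl⟩ := List.getElem_of_mem h
  obtain ⟨j, hj, hji⟩ := List.getElem_of_mem h'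
  rw [hl] at hi
  rw [hl'] at hj
  have hij : j = i := by
    have e1 := h1 i hi
    rw [← hji, h1' j hj] at e1
    have := rl_inj _ _ _ e1
    simpa using this
  subst hij
  have hm : ∀ k, (j + k) % (4 * g) < 4 * g := fun k => Nat.mod_lt _ (by omega)
  have key : ∀ k, (Z.bdry f)[(j + k) % (4 * g)]'(by rw [hl]; exact hm k) =
      (Z.bdry f')[(j + k) % (4 * g)]'(by rw [hl']; exact hm k) := by
    intro k
    induction k with
    | zero => simp only [Nat.add_zero, Nat.mod_eq_of_lt hj]; exact hji.symm
    | succ k ih =>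
      have a1 := h2 _ (hm k)
      have a2 := h2' _ (hm k)
      have b0 : gapN (rl g ⟨_, hm k⟩) (rl g ⟨_, hm (k+1)⟩) = 0 := by
        apply gap_rl
        simp only [Nat.mod_add_mod]
        rfl
      simp only [Nat.mod_add_mod] at a1 a2
      refine hn.uniq _ _ _ a1 (by rw [ih]; exact a2) ?_ ?_
      · rw [h1 _ (hm k)]
        have := h1 _ (hm (k+1))
        rw [this]
        exact b0
      · rw [h1 _ (hm k)]
        have := h1' _ (hm (k+1))
        rw [this]
        exact b0
  apply hn.inj
  apply List.ext_getElem (by rw [hl, hl'])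
  intro i q1 q2
  have := key (i + 4 * g - j)
  have e : (j + (i + 4 * g - j)) % (4 * g) = i := by
    rw [show j + (i + 4 * g - j) = i + 4 * g by omega, Nat.add_mod_right,
      Nat.mod_eq_of_lt (by omega)]
  simpa only [e] using this

theorem Nice.infix (hn : Z.Nice) {f : Z.F} {d x : Z.D} (h : d ∈ Z.bdry f)
    (ha : Z.adj d x) (hx : gapN (Z.dLet d) (Z.dLet x) = 0) :
    [d, x] <:+: (Z.bdry f ++ Z.bdry f) := by
  obtain ⟨hl, h1, h2⟩ := hn.face f
  obtain ⟨i, hi, rfl⟩ := List.getElem_of_mem h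
  have hi' := hi
  rw [hl] at hi
  have hm : (i + 1) % (4 * g) < 4 * g := Nat.mod_lt _ (by omega)
  have e : x = (Z.bdry f)[(i+1) % (4*g)]'(by rw [hl]; exact hm) := by
    refine hn.uniq _ _ _ ha (h2 i hi) hx ?_
    rw [h1 i hi, h1 _ hm]
    exact gap_rl g _ _ rfl
  rw [e]
  set B := Z.bdry f with hB
  have q1 : i < (B ++ B).length := by simp; omega
  have q2 : i + 1 < (B ++ B).length := by simp; omega
  have r1 : (B ++ B)[i] = B[i] := List.getElem_append_left hi'
  have r2 : (B ++ B)[i+1] = B[(i+1) % (4*g)]'(by rw [hl]; exact hm) := by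
    by_cases hc : i + 1 < 4 * g
    · simp only [Nat.mod_eq_of_lt hc]
      exact List.getElem_append_left _
    · have : i + 1 = 4 * g := by omega
      rw [List.getElem_append_right (by omega)]
      simp only [this, hl, Nat.mod_self, Nat.sub_self]
  rw [← r1, ← r2]
  refine ⟨(B ++ B).take i, (B ++ B).drop (i + 2), ?_⟩
  conv_rhs => rw [← List.take_append_drop i (B ++ B)]
  rw [List.drop_eq_getElem_cons q1, List.drop_eq_getElem_cons q2]
  simp

end Complex
namespace Complex

variable {g : ℕ} {Z : Complex g}

theorem nextD_of_gap0 {sE : Set Z.E} {d x : Z.D} (hx : x.1 ∈ sE) (ha : Z.adj d x)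
    (h : gapN (Z.dLet d) (Z.dLet x) = 0) : Z.nextD sE d x :=
  ⟨hx, ha, fun _ _ _ => by omega⟩

theorem faceStep_fill {sF : Set Z.F} {d x : Z.D} (h : Z.faceStep sF d x) : Z.Fill sF d := by
  obtain ⟨f, hf, hi⟩ := h
  refine ⟨f, hf, ?_⟩
  have : d ∈ Z.bdry f ++ Z.bdry f := hi.subset (by simp)
  simpa using this

/-- along a block, either all darts are filled or none is -/
theorem Nice.block_fill (hn : Z.Nice) (sF : Set Z.F) (l : List Z.D)
    (h : List.IsChain (fun d d' => Z.adj d d' ∧ gapN (Z.dLet d) (Z.dLet d') = 0) l) :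
    (∀ d ∈ l, Z.Fill sF d) ∨ (∀ d ∈ l, ¬ Z.Fill sF d) := by
  have step : ∀ d d' : Z.D, Z.adj d d' → gapN (Z.dLet d) (Z.dLet d') = 0 →
      (Z.Fill sF d ↔ Z.Fill sF d') := by
    intro d d' h1 h2
    constructor
    · rintro ⟨f, hf, hd⟩
      exact ⟨f, hf, hn.mem_next hd h1 h2⟩
    · rintro ⟨f, hf, hd⟩
      refine ⟨f, hf, ?_⟩
      obtain ⟨p, hp, p1, p2⟩ := hn.prev hd
      have hg : 0 < 4 * g := by have := (Z.lab d.1).2; omega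
      have e : Z.dRev d = Z.dRev p := by
        have q1 := (gap_eq _ _ _ hg).1 h2
        have q2 := (gap_eq _ _ _ hg).1 p2
        apply hn.uniq0
        · rw [tail_rev, tail_rev]; exact h1.trans p1.symm
        · rw [posLv_rev, posLv_rev]
          have := posArr_lt (Z.dLet d)
          have := posArr_lt (Z.dLet p)
          omega
      have : d = p := by
        simpa [dRev, Prod.ext_iff] using e
      rwa [this]
  induction l with
  | nil => simp
  | cons a l ih =>
    cases l with
    | nil => simp; exact em _
    | cons b l =>
      rw [List.isChain_cons_cons] at h
      have hs := step a b h.1.1 h.1.2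
      rcases ih h.2 with ih | ih
      · left
        intro d hd
        rcases List.mem_cons.1 hd with rfl | hd
        · exact hs.2 (ih b (by simp))
        · exact ih d hd
      · right
        intro d hd
        rcases List.mem_cons.1 hd with rfl | hd
        · exact fun h' => ih b (by simp) (hs.1 h')
        · exact ih d hd


theorem Nice.block_bstep (hn : Z.Nice) {sE : Set Z.E} {sF : Set Z.F} {l : List Z.D}
    (h : Z.IsBlock l) (hE : Z.InSet sE l) (d : Z.D) (hd : d ∈ l) (hF : ¬ Z.Fill sF d) :
    List.IsChain (Z.bStep sE sF) l := by
  have hc : List.IsChain (fun d d' => Z.adj d d' ∧ gapN (Z.dLet d) (Z.dLet d') = 0) l := h.2.2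
  have hnf : ∀ x ∈ l, ¬ Z.Fill sF x := by
    rcases hn.block_fill sF l hc with h | h
    · exact absurd (h d hd) hF
    · exact h
  clear h hd
  induction l with
  | nil => exact .nil
  | cons a l ih =>
    cases l with
    | nil => exact .singleton _
    | cons b l =>
      rw [List.isChain_cons_cons] at hc ⊢
      refine ⟨⟨hE a (by simp), nextD_of_gap0 (hE b (by simp)) hc.1.1 hc.1.2,
        fun hf => hnf a (by simp) (faceStep_fill hf)⟩, ?_⟩
      exact ih (fun x hx => hE x (List.mem_cons_of_mem _ hx)) hc.2
        (fun x hx => hnf x (List.mem_cons_of_mem _ hx))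

theorem Nice.not_fill_of_not_nx (hn : Z.Nice) {T : SubC Z} (hT : T.IsSub) {d : Z.D}
    (h : ¬ Z.Nx T.sE d) : ¬ Z.Fill T.sF d := by
  rintro ⟨f, hf, hd⟩
  obtain ⟨x, hx, h1, h2⟩ := hn.next hd
  exact h ⟨x, hT.2 f hf x hx, h1, h2⟩

theorem Nice.not_fill_of_not_nx' (hn : Z.Nice) {T : SubC Z} (hT : T.IsSub) {d y : Z.D}
    (ha : Z.adj d y) (hy : gapN (Z.dLet d) (Z.dLet y) = 1)
    (h : ¬ Z.Nx T.sE d) : ¬ Z.Fill T.sF y := by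
  rintro ⟨f, hf, hd⟩
  obtain ⟨p, hp, h1, h2⟩ := hn.prev hd
  have hg : 1 < 4 * g := by have := (Z.lab d.1).2; omega
  refine h ⟨Z.dRev p, hT.2 f hf p hp, ?_, ?_⟩
  · unfold adj; rw [tail_rev]; exact ha.trans h1.symm
  · rw [gap_eq _ _ _ (by omega)] at h2 ⊢
    rw [gap_eq _ _ _ hg] at hy
    rw [posLv_rev]
    have := posArr_lt (Z.dLet d)
    have := posArr_lt (Z.dLet p)
    omega

theorem Nice.bStep_gap1 (hn : Z.Nice) {T : SubC Z} (hT : T.IsSub) {d y : Z.D}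
    (hd : d.1 ∈ T.sE) (hyE : y.1 ∈ T.sE)
    (ha : Z.adj d y) (hy : gapN (Z.dLet d) (Z.dLet y) = 1)
    (h : ¬ Z.Nx T.sE d) : Z.bStep T.sE T.sF d y := by
  refine ⟨hd, ⟨hyE, ha, ?_⟩, fun hf => hn.not_fill_of_not_nx hT h (faceStep_fill hf)⟩
  intro x hx hax
  rw [hy]
  by_contra hc
  exact h ⟨x, hx, hax, by omega⟩

theorem not_nx_of_bStep {sE : Set Z.E} {sF : Set Z.F} {d y : Z.D}
    (h : Z.bStep sE sF d y) (hy : gapN (Z.dLet d) (Z.dLet y) = 1) : ¬ Z.Nx sE d := by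
  rintro ⟨x, hx, ha, hg⟩
  have := h.2.1.2.2 x hx ha
  omega

theorem block_snoc {b : List Z.D} (h : Z.IsBlock b) {d x : Z.D} (hd : b.getLast? = some d)
    (ha : Z.adj d x) (hx : gapN (Z.dLet d) (Z.dLet x) = 0) (hl : b.length + 1 ≤ 4 * g) :
    Z.IsBlock (b ++ [x]) := by
  refine ⟨by simp, by simpa using hl, ?_⟩
  have hc : List.IsChain (fun d d' => Z.adj d d' ∧ gapN (Z.dLet d) (Z.dLet d') = 0) b := h.2.2
  show List.IsChain _ _
  rw [List.isChain_append]
  refine ⟨hc, .singleton _, ?_⟩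
  rw [hd]
  simpa using ⟨ha, hx⟩

theorem chainStep_snoc {b b' : List Z.D} {x : Z.D} (h : Z.chainStep b b') :
    Z.chainStep b (b' ++ [x]) := by
  obtain ⟨d, d', h1, h2, h3⟩ := h
  exact ⟨d, d', h1, by simp [List.head?_append, h2], h3⟩

/-- one step along a chain in the subcomplex `T` -/
theorem Nice.glue (hn : Z.Nice) {T : SubC Z} (hT : T.IsSub) {p b : List Z.D}
    (hp : Z.InSet T.sE p) (hb : Z.InSet T.sE b) (hB : Z.IsBlock b)
    (hs : Z.chainStep p b) (hx : ∀ d ∈ p.getLast?, ¬ Z.Nx T.sE d) :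
    List.IsChain (Z.bStep T.sE T.sF) b ∧
      (∀ x ∈ p.getLast?, ∀ y ∈ b.head?, Z.bStep T.sE T.sF x y) ∧
      ∃ y ∈ b, ¬ Z.Fill T.sF y := by
  obtain ⟨d, y, h1, h2, h3, h4⟩ := hs
  have hnx := hx d (by simp [h1])
  have hyb : y ∈ b := List.mem_of_mem_head? (by simp [h2])
  have hdp : d ∈ p := List.mem_of_mem_getLast? (by simp [h1])
  have hf := hn.not_fill_of_not_nx' hT h3 h4 hnx
  refine ⟨hn.block_bstep hB hb y hyb hf, ?_, y, hyb, hf⟩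
  rw [h1, h2]
  simpa using hn.bStep_gap1 hT (hp d hdp) (hb y hyb) h3 h4 hnx

theorem Nice.tail (hn : Z.Nice) (hg : 2 ≤ g) {T : SubC Z} (hT : T.IsSub) :
    ∀ (rest : List (List Z.D)) (p : List Z.D) (k : ℕ),
      rest.map List.length = List.replicate k (2 * g - 1) ++ [2 * g] →
      Z.InSet T.sE p → (∀ b ∈ rest, Z.IsBlock b ∧ Z.InSet T.sE b) →
      List.IsChain Z.chainStep (p :: rest) →
      (∀ d ∈ p.getLast?, ¬ Z.Nx T.sE d) → List.IsChain (Z.bStep T.sE T.sF) p →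
      ∃ (bs : List (List Z.D)) (m : ℕ),
        bs.map List.length = List.replicate m (2 * g - 1) ++ [2 * g] ∧
        (∀ b ∈ bs, Z.IsBlock b ∧ Z.InSet T.sE b) ∧
        List.IsChain Z.chainStep (p :: bs) ∧
        List.IsChain (Z.bStep T.sE T.sF) (p ++ bs.flatten) := by
  intro rest
  induction rest with
  | nil => intro p k h; simp at h
  | cons b rest ih =>
    intro p k hlen hpE hb hc hx hpc
    rw [List.isChain_cons_cons] at hc
    obtain ⟨hbB, hbE⟩ := hb b (by simp)
    obtain ⟨g1, g2, y, hyb, hyf⟩ := hn.glue hT hpE hbE hbB hc.1 hx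
    cases k with
    | zero =>
      simp only [List.map_cons, List.replicate_zero, List.nil_append, List.cons.injEq,
        List.map_eq_nil_iff] at hlen
      obtain ⟨hl, rfl⟩ := hlen
      refine ⟨[b], 0, by simp [hl], by simp [hbB, hbE], by simp [hc.1], ?_⟩
      simp only [List.flatten_cons, List.flatten_nil, List.append_nil]
      rw [List.isChain_append]
      exact ⟨hpc, g1, g2⟩
    | succ k =>
      simp only [List.map_cons, List.replicate_succ, List.cons_append, List.cons.injEq] at hlen
      obtain ⟨hl, hlen⟩ := hlen
      by_cases hnx : ∃ d ∈ b.getLast?, Z.Nx T.sE d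
      · obtain ⟨d, hd, x, hxE, hxa, hxg⟩ := hnx
        have hB' := block_snoc hbB hd hxa hxg (by omega)
        have hE' : Z.InSet T.sE (b ++ [x]) := by
          intro z hz
          rcases List.mem_append.1 hz with hz | hz
          · exact hbE z hz
          · rw [List.mem_singleton.1 hz]; exact hxE
        have hs' : Z.chainStep p (b ++ [x]) := chainStep_snoc hc.1
        obtain ⟨g1, g2, -⟩ := hn.glue hT hpE hE' hB' hs' hx
        refine ⟨[b ++ [x]], 0, by simp [hl]; omega, by simp [hB', hE'], by simp [hs'], ?_⟩
        simp only [List.flatten_cons, List.flatten_nil, List.append_nil]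
        rw [List.isChain_append]
        exact ⟨hpc, g1, g2⟩
      · push Not at hnx
        obtain ⟨bs, m, i1, i2, i3, i4⟩ :=
          ih b k hlen hbE (fun b' hb' => hb b' (List.mem_cons_of_mem _ hb')) hc.2 hnx g1
        refine ⟨b :: bs, m + 1, by simp [hl, i1, List.replicate_succ], ?_,
          List.isChain_cons_cons.2 ⟨hc.1, i3⟩, ?_⟩
        · intro b' hb'
          rcases List.mem_cons.1 hb' with rfl | hb'
          · exact ⟨hbB, hbE⟩
          · exact i2 b' hb'
        · rw [List.flatten_cons, List.isChain_append]
          refine ⟨hpc, i4, ?_⟩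
          rw [List.head?_append_of_ne_nil _ hbB.1]
          exact g2

theorem Nice.ctail (hn : Z.Nice) (hg : 2 ≤ g) {T : SubC Z} (hT : T.IsSub)
    (hTB : ∀ l, Z.BPath T.sE T.sF l → ¬ (Z.IsBlock l ∧ l.length = 2 * g)) :
    ∀ (rest : List (List Z.D)) (p : List Z.D),
      (∀ b ∈ rest, b.length = 2 * g - 1) →
      Z.InSet T.sE p → (∀ b ∈ rest, Z.IsBlock b ∧ Z.InSet T.sE b) →
      List.IsChain Z.chainStep (p :: rest) →
      (∀ d ∈ p.getLast?, ¬ Z.Nx T.sE d) →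
        List.IsChain (Z.bStep T.sE T.sF) rest.flatten ∧
        (∀ x ∈ p.getLast?, ∀ y ∈ rest.flatten.head?, Z.bStep T.sE T.sF x y) := by
  intro rest
  induction rest with
  | nil => intro p _ _ _ _ _; simp
  | cons b rest ih =>
    intro p hlen hpE hb hc hx
    rw [List.isChain_cons_cons] at hc
    obtain ⟨hbB, hbE⟩ := hb b (by simp)
    have hl := hlen b (by simp)
    obtain ⟨g1, g2, y, hyb, hyf⟩ := hn.glue hT hpE hbE hbB hc.1 hx
    have hnx : ∀ d ∈ b.getLast?, ¬ Z.Nx T.sE d := by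
      rintro d hd ⟨x, hxE, hxa, hxg⟩
      have hB' := block_snoc hbB hd hxa hxg (by omega)
      have hE' : Z.InSet T.sE (b ++ [x]) := by
        intro z hz
        rcases List.mem_append.1 hz with hz | hz
        · exact hbE z hz
        · rw [List.mem_singleton.1 hz]; exact hxE
      obtain ⟨g1, -⟩ := hn.glue hT hpE hE' hB' (chainStep_snoc hc.1) hx
      exact hTB (b ++ [x]) ⟨by simp, hE', g1⟩ ⟨hB', by simp [hl]; omega⟩
    obtain ⟨i1, i2⟩ := ih b (fun b' hb' => hlen b' (List.mem_cons_of_mem _ hb')) hbE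
      (fun b' hb' => hb b' (List.mem_cons_of_mem _ hb')) hc.2 hnx
    rw [List.flatten_cons, List.isChain_append, List.head?_append_of_ne_nil _ hbB.1]
    exact ⟨⟨g1, i1, i2⟩, g2⟩

/-- the intersection of a family of subcomplexes -/
structure IsInter (C : SubC Z) (𝓕 : Set (SubC Z)) : Prop where
  ne : 𝓕.Nonempty
  sub : ∀ T ∈ 𝓕, T.IsSub
  hE : C.sE = ⋂ T ∈ 𝓕, T.sE
  hF : C.sF = ⋂ T ∈ 𝓕, T.sF

theorem Nice.exists_nx (hn : Z.Nice) {C : SubC Z} {𝓕 : Set (SubC Z)} (h : IsInter C 𝓕)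
    {d : Z.D} (hd : ¬ Z.Nx C.sE d) : ∃ T ∈ 𝓕, ¬ Z.Nx T.sE d := by
  by_contra hc
  push Not at hc
  obtain ⟨T0, hT0⟩ := h.ne
  obtain ⟨x, hx, ha, hg⟩ := hc T0 hT0
  refine hd ⟨x, ?_, ha, hg⟩
  rw [h.hE]
  simp only [Set.mem_iInter]
  intro T hT
  obtain ⟨x', hx', ha', hg'⟩ := hc T hT
  rwa [hn.uniq d x x' ha ha' hg hg']

theorem Nice.exists_fill (hn : Z.Nice) {C : SubC Z} {𝓕 : Set (SubC Z)} (h : IsInter C 𝓕)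
    {d : Z.D} (hd : ¬ Z.Fill C.sF d) : ∃ T ∈ 𝓕, ¬ Z.Fill T.sF d := by
  by_contra hc
  push Not at hc
  obtain ⟨T0, hT0⟩ := h.ne
  obtain ⟨f, hf, hdf⟩ := hc T0 hT0
  refine hd ⟨f, ?_, hdf⟩
  rw [h.hF]
  simp only [Set.mem_iInter]
  intro T hT
  obtain ⟨f', hf', hdf'⟩ := hc T hT
  rwa [hn.faceUniq hdf hdf']

theorem IsInter.inSet {C : SubC Z} {𝓕 : Set (SubC Z)} (h : IsInter C 𝓕) {T : SubC Z}
    (hT : T ∈ 𝓕) {l : List Z.D} (hl : Z.InSet C.sE l) : Z.InSet T.sE l := by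
  intro d hd
  have := hl d hd
  rw [h.hE] at this
  simp only [Set.mem_iInter] at this
  exact this T hT

theorem Nice.block_case (hn : Z.Nice) {C : SubC Z} {𝓕 : Set (SubC Z)}
    (h : IsInter C 𝓕) {l : List Z.D} (hl : Z.BPath C.sE C.sF l) (hB : Z.IsBlock l)
    (h2 : 2 ≤ l.length) : ∃ T ∈ 𝓕, Z.BPath T.sE T.sF l := by
  obtain ⟨hne, hE, hc⟩ := hl
  obtain ⟨a, b, l', rfl⟩ : ∃ a b l', l = a :: b :: l' := by
    match l, h2 with
    | a :: b :: l', _ => exact ⟨a, b, l', rfl⟩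
  have hc1 : Z.bStep C.sE C.sF a b := (List.isChain_cons_cons.1 hc).1
  have hB1 := (List.isChain_cons_cons.1 hB.2.2).1
  have hnf : ¬ Z.Fill C.sF a := by
    rintro ⟨f, hf, ha⟩
    exact hc1.2.2 ⟨f, hf, hn.infix ha hB1.1 hB1.2⟩
  obtain ⟨T, hT, hTf⟩ := hn.exists_fill h hnf
  exact ⟨T, hT, hne, h.inSet hT hE, hn.block_bstep hB (h.inSet hT hE) a (by simp) hTf⟩

theorem Nice.inter_br (hn : Z.Nice) (hg : 2 ≤ g) {C : SubC Z} {𝓕 : Set (SubC Z)}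
    (h : IsInter C 𝓕) (hBR : ∀ T ∈ 𝓕, Z.BoundaryReduced T.sE T.sF) :
    Z.BoundaryReduced C.sE C.sF := by
  constructor
  · rintro l hl ⟨hB, hlen⟩
    obtain ⟨T, hT, hTl⟩ := hn.block_case h hl hB (by omega)
    exact (hBR T hT).1 l hTl ⟨hB, hlen⟩
  · rintro bs ⟨⟨hne, hbl, hch⟩, k, hk⟩ ⟨-, hE, hc⟩
    cases bs with
    | nil => exact hne rfl
    | cons p rest =>
      simp only [List.map_cons, List.cons.injEq] at hk
      obtain ⟨hp, hk⟩ := hk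
      have hch : List.IsChain Z.chainStep (p :: rest) := hch
      have hc : List.IsChain (Z.bStep C.sE C.sF) (p :: rest).flatten := hc
      obtain ⟨b, rest', rfl⟩ : ∃ b rest', rest = b :: rest' := by
        cases rest with
        | nil => simp at hk
        | cons b r => exact ⟨b, r, rfl⟩
      obtain ⟨d, y, h1, h2, h3, h4⟩ := (List.isChain_cons_cons.1 hch).1
      have hst : Z.bStep C.sE C.sF d y := by
        rw [List.flatten_cons, List.isChain_append] at hc
        refine hc.2.2 d h1 y ?_
        rw [List.flatten_cons, List.head?_append_of_ne_nil _ (hbl b (by simp)).1]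
        exact h2
      obtain ⟨T, hT, hTn⟩ := hn.exists_nx h (not_nx_of_bStep hst h4)
      have hTs := h.sub T hT
      have hET : ∀ c ∈ p :: b :: rest', Z.InSet T.sE c := by
        intro c hc' x hx
        exact h.inSet hT hE x (List.mem_flatten.2 ⟨c, hc', hx⟩)
      have hpB := hbl p (by simp)
      have hpc : List.IsChain (Z.bStep T.sE T.sF) p :=
        hn.block_bstep hpB (hET p (by simp)) d (List.mem_of_mem_getLast? h1)
          (hn.not_fill_of_not_nx hTs hTn)
      obtain ⟨bs, m, j1, j2, j3, j4⟩ := hn.tail hg hTs (b :: rest') p k hk (hET p (by simp))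
        (fun c hc' => ⟨hbl c (List.mem_cons_of_mem _ hc'), hET c (List.mem_cons_of_mem _ hc')⟩)
        hch (by rw [h1]; simpa using hTn) hpc
      refine (hBR T hT).2 (p :: bs) ⟨⟨by simp, ?_, j3⟩, m, by simp [hp, j1]⟩ ⟨?_, ?_, ?_⟩
      · intro c hc'
        rcases List.mem_cons.1 hc' with rfl | hc'
        · exact hpB
        · exact (j2 c hc').1
      · simp [hpB.1]
      · intro x hx
        obtain ⟨c, hc', hx'⟩ := List.mem_flatten.1 hx
        rcases List.mem_cons.1 hc' with rfl | hc'
        · exact hET c (by simp) x hx'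
        · exact (j2 c hc').2 x hx'
      · rw [List.flatten_cons]; exact j4

theorem Nice.inter_sbr (hn : Z.Nice) (hg : 2 ≤ g) {C : SubC Z} {𝓕 : Set (SubC Z)}
    (h : IsInter C 𝓕) (hBR : ∀ T ∈ 𝓕, Z.StronglyBoundaryReduced T.sE T.sF) :
    Z.StronglyBoundaryReduced C.sE C.sF := by
  constructor
  · rintro l hl ⟨hB, hlen⟩
    obtain ⟨T, hT, hTl⟩ := hn.block_case h hl hB (by omega)
    exact (hBR T hT).1 l hTl ⟨hB, hlen⟩
  · rintro bs hbs ⟨⟨-, hE, hc⟩, d, y, h1, h2, hst⟩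
    obtain ⟨⟨⟨hne, hbl, hch⟩, p, b, hp, hb, d', y', h1', h2', h3, h4⟩, hlen⟩ := id hbs
    have hpm : p ∈ bs := List.mem_of_mem_getLast? hp
    have hbm : b ∈ bs := List.mem_of_mem_head? hb
    have hch : List.IsChain Z.chainStep bs := hch
    have e1 : bs.flatten.getLast? = some d' := by
      obtain ⟨init, rfl⟩ := List.getLast?_eq_some_iff.1 hp
      simp [List.getLast?_append, h1']
    have e2 : bs.flatten.head? = some y' := by
      obtain ⟨tl, rfl⟩ := List.head?_eq_some_iff.1 hb
      simp [List.head?_append, h2']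
    obtain rfl : d' = d := by rw [e1] at h1; simpa using h1
    obtain rfl : y' = y := by rw [e2] at h2; simpa using h2
    obtain ⟨T, hT, hTn⟩ := hn.exists_nx h (not_nx_of_bStep hst h4)
    have hTs := h.sub T hT
    have hET : ∀ c ∈ bs, Z.InSet T.sE c := by
      intro c hc' x hx
      exact h.inSet hT hE x (List.mem_flatten.2 ⟨c, hc', hx⟩)
    have hch' : List.IsChain Z.chainStep (p :: bs) := by
      obtain ⟨tl, rfl⟩ := List.head?_eq_some_iff.1 hb
      exact List.isChain_cons_cons.2 ⟨⟨_, _, h1', h2', h3, h4⟩, hch⟩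
    obtain ⟨i1, i2⟩ := hn.ctail hg hTs (hBR T hT).1 bs p hlen (hET p hpm)
      (fun c hc' => ⟨hbl c hc', hET c hc'⟩) hch' (by rw [h1']; simpa using hTn)
    refine (hBR T hT).2 bs hbs ⟨⟨?_, h.inSet hT hE, i1⟩, d', y', e1, e2,
      i2 d' h1' y' e2⟩
    intro h0
    rw [h0] at e1
    simp at e1

end Complex

/-- Let `Y` (= `S`) be a tiled surface embedded in a boundary
reduced tiled surface `Z`. Then the BR-closure — the intersection of all
intermediate boundary reduced subcomplexes — contains `Y` and is boundary
reduced; likewise for the SBR-closure when `Z` is strongly boundary reduced. -/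
theorem statement_3 (g : ℕ) (hg : 2 ≤ g) (Z : Complex g) (hZ : Z.IsTiledSurface)
    (S : SubC Z) (hS : S.IsSub) :
    (Z.BoundaryReduced Set.univ Set.univ →
      S.le (BRcl Z S) ∧ Z.BoundaryReduced (BRcl Z S).sE (BRcl Z S).sF) ∧
    (Z.StronglyBoundaryReduced Set.univ Set.univ →
      S.le (SBRcl Z S) ∧
        Z.StronglyBoundaryReduced (SBRcl Z S).sE (SBRcl Z S).sF) := by
  have hn := Z.nice hZ
  have hsub : (fullSub Z).IsSub := ⟨fun _ _ => ⟨trivial, trivial⟩, fun _ _ _ _ => trivial⟩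
  have hle : S.le (fullSub Z) := ⟨fun _ _ => trivial, fun _ _ => trivial, fun _ _ => trivial⟩
  constructor
  · intro hBR
    refine ⟨⟨?_, ?_, ?_⟩, ?_⟩
    · exact Set.subset_iInter₂ fun T hT => hT.2.1.1
    · exact Set.subset_iInter₂ fun T hT => hT.2.1.2.1
    · exact Set.subset_iInter₂ fun T hT => hT.2.1.2.2
    · exact hn.inter_br hg (C := BRcl Z S) (𝓕 := {T : SubC Z | T.IsSub ∧ S.le T ∧
        Z.BoundaryReduced T.sE T.sF}) ⟨⟨fullSub Z, hsub, hle, hBR⟩, fun T hT => hT.1, rfl, rfl⟩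
        (fun T hT => hT.2.2)
  · intro hBR
    refine ⟨⟨?_, ?_, ?_⟩, ?_⟩
    · exact Set.subset_iInter₂ fun T hT => hT.2.1.1
    · exact Set.subset_iInter₂ fun T hT => hT.2.1.2.1
    · exact Set.subset_iInter₂ fun T hT => hT.2.1.2.2
    · exact hn.inter_sbr hg (C := SBRcl Z S) (𝓕 := {T : SubC Z | T.IsSub ∧ S.le T ∧
        Z.StronglyBoundaryReduced T.sE T.sF}) ⟨⟨fullSub Z, hsub, hle, hBR⟩, fun T hT => hT.1,
        rfl, rfl⟩ (fun T hT => hT.2.2)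

end CS

end
end

section
/- Let Y be a compact tiled surface embedded in a boundary reduced tiled surface Z. Then the BR-closure BR(Y↪Z) is compact. -/
/-!
Formalization preamble for "Core Surfaces" (Magee–Puder).

We work with a fixed combinatorial (CW) model.  The surface `Σ_g` has one vertex,
`2g` directed labeled edges (the label `2i` plays the role of `a_{i+1}` and `2i+1`
the role of `b_{i+1}`), and one `4g`-gon glued along `[a₁,b₁]⋯[a_g,b_g]`.

* `Gamma g` is the surface group, presented by the single relator.
* A `Complex g` is a combinatorial 2-complex with directed, labeled edges and
  2-cells given by their boundary walks; coverings of `Σ_g` are the complexes in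
  which every vertex has exactly one incoming/outgoing edge of each label, every
  walk reading the relator is closed, and every closed walk reading the relator
  bounds exactly one face (`IsCovering`).  A tiled surface is a complex that
  embeds into such a covering (`IsTiledSurface`).
* Blocks, chains, boundary cycles (via the ribbon structure coming from the fixed
  cyclic order of the `4g` half-edges around a vertex of `Σ_g`), boundary-reduced
  and strongly boundary-reduced surfaces are defined combinatorially.
* Homotopy of edge-walks is the edge-path-group homotopy: backtrack insertions and
  insertions of boundaries of (present) faces.
* `cover g J` is the covering space `J\~Σ_g` of `Σ_g` associated to a subgroup
  `J ≤ Γ_g` (vertices = right cosets), and `coreSub g J` is the core surface of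
  `J`, defined exactly as in the paper: the union of all shortest representative
  cycles of essential free-homotopy classes, together with all components of the
  complement containing finitely many `4g`-gons.
-/

noncomputable section

namespace CS

/-! ### Proof of compactness of the BR-closure -/

namespace Pf

theorem posLv_lt {g : ℕ} (s : Letter g) : posLv s < 4 * g := by
  have := s.1.2
  unfold posLv posOut posIn
  split_ifs <;> omega

theorem posArr_lt {g : ℕ} (s : Letter g) : posArr s < 4 * g := by
  have := s.1.2
  unfold posArr posOut posIn
  split_ifs <;> omega

theorem posLv_inj {g : ℕ} {s t : Letter g} (h : posLv s = posLv t) : s = t := by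
  obtain ⟨⟨a, ha⟩, b⟩ := s
  obtain ⟨⟨c, hc⟩, d⟩ := t
  cases b <;> cases d <;> simp [posLv, posOut, posIn] at h ⊢ <;> split_ifs at h <;> omega

theorem gap_zero_iff {g : ℕ} (s t : Letter g) :
    gapN s t = 0 ↔ posLv t = posArr s + 1 ∨ (posLv t = 0 ∧ posArr s + 1 = 4 * g) := by
  have h1 := posLv_lt t
  have h2 := posArr_lt s
  unfold gapN
  by_cases h : posLv t + 4 * g - (posArr s + 1) < 4 * g
  · rw [Nat.mod_eq_of_lt h]; omega
  · rw [Nat.mod_eq_sub_mod (by omega), Nat.mod_eq_of_lt (by omega)]; omega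

theorem gap_one_iff {g : ℕ} (hg : 2 ≤ g) (s t : Letter g) :
    gapN s t = 1 ↔ posLv t = posArr s + 2 ∨ (posLv t + 4 * g = posArr s + 2) := by
  have h1 := posLv_lt t
  have h2 := posArr_lt s
  unfold gapN
  by_cases h : posLv t + 4 * g - (posArr s + 1) < 4 * g
  · rw [Nat.mod_eq_of_lt h]; omega
  · rw [Nat.mod_eq_sub_mod (by omega), Nat.mod_eq_of_lt (by omega)]; omega

theorem gap_zero_unique {g : ℕ} {s t t' : Letter g} (h : gapN s t = 0) (h' : gapN s t' = 0) :
    t = t' := by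
  apply posLv_inj
  have h1 := posLv_lt t
  have h2 := posLv_lt t'
  rw [gap_zero_iff] at h h'
  omega

/-- Reversed letter. -/
def flp {g : ℕ} (s : Letter g) : Letter g := (s.1, !s.2)

theorem posArr_eq {g : ℕ} (s : Letter g) : posArr s = posLv (flp s) := by
  obtain ⟨a, b⟩ := s
  cases b <;> simp [posArr, posLv, flp]

theorem posArr_flp {g : ℕ} (s : Letter g) : posArr (flp s) = posLv s := by
  obtain ⟨a, b⟩ := s
  cases b <;> simp [posArr, posLv, flp]

theorem gap_corner {g : ℕ} (hg : 2 ≤ g) {s t x : Letter g} (h1 : gapN s t = 1)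
    (h0 : gapN s x = 0) : gapN (flp x) t = 0 := by
  rw [gap_one_iff hg] at h1
  rw [gap_zero_iff] at h0 ⊢
  rw [posArr_flp]
  have := posLv_lt t
  have := posLv_lt x
  omega

theorem gap_zero_unique_left {g : ℕ} {s s' t : Letter g} (h : gapN s t = 0) (h' : gapN s' t = 0) :
    s = s' := by
  have e : flp s = flp s' := by
    apply posLv_inj
    rw [← posArr_eq, ← posArr_eq]
    have h1 := posArr_lt s
    have h2 := posArr_lt s'
    rw [gap_zero_iff] at h h'
    omega
  obtain ⟨a, b⟩ := s
  obtain ⟨c, d⟩ := s'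
  simpa [flp] using e

/-- Letter number `i` of the periodic relator. -/
def rl (g : ℕ) (hg : 0 < g) (i : ℕ) : Letter g :=
  (relLabel g ⟨i % (4 * g), Nat.mod_lt _ (by omega)⟩,
   relSign g ⟨i % (4 * g), Nat.mod_lt _ (by omega)⟩)

theorem rl_gap_aux {g : ℕ} (p q : Fin (4 * g))
    (e : ((p : ℕ) + 1 = 4 * g ∧ (q : ℕ) = 0) ∨ (q : ℕ) = p + 1) :
    gapN (relLabel g p, relSign g p) (relLabel g q, relSign g q) = 0 := by
  rw [gap_zero_iff]
  obtain ⟨p, hp⟩ := p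
  obtain ⟨q, hq⟩ := q
  simp only at e
  have h4 : p % 4 = 0 ∨ p % 4 = 1 ∨ p % 4 = 2 ∨ p % 4 = 3 := by omega
  rcases e with ⟨h, rfl⟩ | rfl
  · have : p % 4 = 3 := by omega
    simp [posLv, posArr, relLabel, relSign, this, posOut, posIn]
    omega
  · rcases h4 with h4 | h4 | h4 | h4
    · have h5 : (p + 1) % 4 = 1 := by omega
      have h6 : (p + 1) / 4 = p / 4 := by omega
      simp [posLv, posArr, relLabel, relSign, h4, h5, h6, posOut, posIn]; try omega
    · have h5 : (p + 1) % 4 = 2 := by omega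
      have h6 : (p + 1) / 4 = p / 4 := by omega
      simp [posLv, posArr, relLabel, relSign, h4, h5, h6, posOut, posIn]; try omega
    · have h5 : (p + 1) % 4 = 3 := by omega
      have h6 : (p + 1) / 4 = p / 4 := by omega
      simp [posLv, posArr, relLabel, relSign, h4, h5, h6, posOut, posIn]; try omega
    · have h5 : (p + 1) % 4 = 0 := by omega
      have h6 : (p + 1) / 4 = p / 4 + 1 := by omega
      simp [posLv, posArr, relLabel, relSign, h4, h5, h6, posOut, posIn]; try omega

theorem rl_gap {g : ℕ} (hg : 0 < g) (i : ℕ) : gapN (rl g hg i) (rl g hg (i + 1)) = 0 := by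
  apply rl_gap_aux
  have h0 : i % (4 * g) < 4 * g := Nat.mod_lt _ (by omega)
  simp only
  rw [Nat.add_mod, Nat.mod_eq_of_lt (show 1 < 4 * g by omega)]
  by_cases h : i % (4 * g) + 1 = 4 * g
  · left; exact ⟨h, by rw [h, Nat.mod_self]⟩
  · right; exact Nat.mod_eq_of_lt (by omega)

theorem rl_inj {g : ℕ} (hg : 0 < g) {i j : ℕ} (h : rl g hg i = rl g hg j) :
    i % (4 * g) = j % (4 * g) := by
  unfold rl relLabel relSign at h
  simp only [Prod.mk.injEq, Fin.mk.injEq, decide_eq_decide] at h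
  omega

theorem rl_congr {g : ℕ} (hg : 0 < g) {i j : ℕ} (h : i % (4 * g) = j % (4 * g)) :
    rl g hg i = rl g hg j := by
  unfold rl
  simp only [h]

theorem relatorWord_length (g : ℕ) : (relatorWord g).length = 4 * g := by
  simp [relatorWord]

theorem relatorWord_get {g : ℕ} (hg : 0 < g) (i : ℕ) :
    (relatorWord g)[i % (4 * g)]? = some (rl g hg i) := by
  have h0 : i % (4 * g) < 4 * g := Nat.mod_lt _ (by omega)
  simp [relatorWord, rl, h0]

/-- The data of boundary parametrisations of the faces. -/
structure Good {g : ℕ} (hg : 0 < g) (Z : Complex g) (B : Z.F → ℕ → Z.D) : Prop where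
  p1 : Z.P1
  adj : ∀ f i, Z.adj (B f i) (B f (i + 1))
  lt : ∀ f i, Z.dLet (B f i) = rl g hg i
  len : ∀ f, (Z.bdry f).length = 4 * g
  get : ∀ f i, (Z.bdry f)[i % (4 * g)]? = some (B f i)
  inj : Function.Injective Z.bdry

theorem walk_facts {g : ℕ} {Z : Complex g} {u v : Z.V} {l : List Z.D} (h : Z.WalkFrom u v l) :
    l.IsChain Z.adj ∧ (∀ d ∈ l.head?, Z.dTail d = u) ∧ (∀ d ∈ l.getLast?, Z.dHead d = v) ∧
      (l = [] → u = v) := by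
  induction h with
  | nil v => simp
  | cons d h ih =>
    obtain ⟨h1, h2, h3, h4⟩ := ih
    refine ⟨List.isChain_cons.2 ⟨fun y hy => (h2 y hy).symm, h1⟩, by simp, ?_, by simp⟩
    intro d' hd'
    rename_i l
    cases l with
    | nil => simp at hd'; subst hd'; exact h4 rfl
    | cons a l => exact h3 d' (by simpa using hd')

theorem good_exists {g : ℕ} (hg : 0 < g) (Z : Complex g) (hZ : Z.IsTiledSurface) :
    ∃ B, Good hg Z B := by
  obtain ⟨C, hC, φ, hV, hE, hF⟩ := hZ
  obtain ⟨hP1, ⟨hP3, hP3'⟩, -⟩ := hC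
  have hlen : ∀ f, (Z.bdry f).length = 4 * g := by
    intro f
    have h := congrArg List.length (hP3 (φ.mF f)).2
    rw [relatorWord_length, φ.hbdry] at h
    simpa [Complex.wordOf] using h
  have hlt : ∀ f i, i % (4 * g) < (Z.bdry f).length := by
    intro f i; rw [hlen]; exact Nat.mod_lt _ (by omega)
  let B : Z.F → ℕ → Z.D := fun f i => (Z.bdry f)[i % (4 * g)]'(hlt f i)
  have hget : ∀ f i, (Z.bdry f)[i % (4 * g)]? = some (B f i) := by
    intro f i
    exact List.getElem?_eq_getElem (hlt f i)
  have hhead : ∀ d : Z.D, C.dHead (φ.mD d) = φ.mV (Z.dHead d) := by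
    rintro ⟨e, b⟩
    cases b <;> simp [Complex.dHead, Hom.mD, φ.hsrc, φ.hdst]
  have htail : ∀ d : Z.D, C.dTail (φ.mD d) = φ.mV (Z.dTail d) := by
    rintro ⟨e, b⟩
    cases b <;> simp [Complex.dTail, Hom.mD, φ.hsrc, φ.hdst]
  have hb : ∀ f, C.bdry (φ.mF f) = (Z.bdry f).map φ.mD := φ.hbdry
  refine ⟨B, ⟨?_, ?_⟩, ?_, ?_, hlen, hget, ?_⟩
  · intro e e' h h'
    apply hE
    apply hP1.1
    · rw [φ.hsrc, φ.hsrc, h]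
    · rw [φ.hlab, φ.hlab, h']
  · intro e e' h h'
    apply hE
    apply hP1.2
    · rw [φ.hdst, φ.hdst, h]
    · rw [φ.hlab, φ.hlab, h']
  · intro f i
    apply hV
    rw [← hhead, ← htail]
    obtain ⟨⟨v, hw⟩, -⟩ := hP3 (φ.mF f)
    rw [hb] at hw
    obtain ⟨h1, h2, h3, -⟩ := walk_facts hw
    have h0 : i % (4 * g) < 4 * g := Nat.mod_lt _ (by omega)
    have hg1 := hget f i
    have hg2 := hget f (i + 1)
    have e : (i + 1) % (4 * g) = if i % (4 * g) + 1 = 4 * g then 0 else i % (4 * g) + 1 := by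
      rw [Nat.add_mod]
      rw [Nat.mod_eq_of_lt (show 1 < 4 * g by omega)]
      split_ifs with h
      · rw [h, Nat.mod_self]
      · exact Nat.mod_eq_of_lt (by omega)
    rw [e] at hg2
    split_ifs at hg2 with h
    · rw [h2 (φ.mD (B f (i + 1))), h3 (φ.mD (B f i))]
      · rw [List.getLast?_eq_getElem?, List.length_map, hlen, List.getElem?_map,
          show 4 * g - 1 = i % (4 * g) by omega, hg1]; rfl
      · rw [List.head?_eq_getElem?, List.getElem?_map, hg2]; rfl
    · rw [List.isChain_iff_getElem] at h1
      have h5 := h1 (i % (4 * g)) (by rw [List.length_map, hlen]; omega)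
      rw [List.getElem?_eq_some_iff] at hg1 hg2
      obtain ⟨_, hg1⟩ := hg1
      obtain ⟨_, hg2⟩ := hg2
      rw [List.getElem_map, List.getElem_map, hg1, hg2] at h5
      exact h5
  · intro f i
    have h := (hP3 (φ.mF f)).2
    have h1 := relatorWord_get hg i
    rw [← h, hb, Complex.wordOf, List.getElem?_map, List.getElem?_map, hget] at h1
    simp at h1
    rw [← h1]
    simp [Complex.dLet, Hom.mD, φ.hlab]
  · intro f f' h
    apply hF
    apply hP3'
    rw [hb, hb, h]

section
variable {g : ℕ} {hg : 0 < g} {Z : Complex g} {B : Z.F → ℕ → Z.D}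

theorem dart_ext_tail (h : Z.P1) {x y : Z.D} (ht : Z.dTail x = Z.dTail y)
    (hl : Z.dLet x = Z.dLet y) : x = y := by
  obtain ⟨e, b⟩ := x
  obtain ⟨e', b'⟩ := y
  simp only [Complex.dLet, Prod.mk.injEq] at hl
  obtain ⟨hl, rfl⟩ := hl
  cases b
  · rw [h.2 e e' (by simpa [Complex.dTail] using ht) hl]
  · rw [h.1 e e' (by simpa [Complex.dTail] using ht) hl]

theorem dart_ext_head (h : Z.P1) {x y : Z.D} (ht : Z.dHead x = Z.dHead y)
    (hl : Z.dLet x = Z.dLet y) : x = y := by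
  obtain ⟨e, b⟩ := x
  obtain ⟨e', b'⟩ := y
  simp only [Complex.dLet, Prod.mk.injEq] at hl
  obtain ⟨hl, rfl⟩ := hl
  cases b
  · rw [h.1 e e' (by simpa [Complex.dHead] using ht) hl]
  · rw [h.2 e e' (by simpa [Complex.dHead] using ht) hl]

theorem dTail_rev (d : Z.D) : Z.dTail (Z.dRev d) = Z.dHead d := by
  obtain ⟨e, b⟩ := d
  cases b <;> simp [Complex.dTail, Complex.dHead, Complex.dRev]

theorem dHead_rev (d : Z.D) : Z.dHead (Z.dRev d) = Z.dTail d := by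
  obtain ⟨e, b⟩ := d
  cases b <;> simp [Complex.dTail, Complex.dHead, Complex.dRev]

theorem dLet_rev (d : Z.D) : Z.dLet (Z.dRev d) = flp (Z.dLet d) := rfl

theorem rev_rev (d : Z.D) : Z.dRev (Z.dRev d) = d := by
  obtain ⟨e, b⟩ := d
  simp [Complex.dRev]

/-- zero-gap step -/
def zs (Z : Complex g) (d d' : Z.D) : Prop := Z.adj d d' ∧ gapN (Z.dLet d) (Z.dLet d') = 0

theorem zs_right (h : Z.P1) {d x y : Z.D} (h1 : zs Z d x) (h2 : zs Z d y) : x = y :=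
  dart_ext_tail h (h1.1.symm.trans h2.1) (gap_zero_unique h1.2 h2.2)

theorem zs_left (h : Z.P1) {d x y : Z.D} (h1 : zs Z x d) (h2 : zs Z y d) : x = y :=
  dart_ext_head h (h1.1.trans h2.1.symm) (gap_zero_unique_left h1.2 h2.2)

theorem zs_corner (hg : 2 ≤ g) {d d' x : Z.D} (h : Z.adj d d')
    (h1 : gapN (Z.dLet d) (Z.dLet d') = 1) (h0 : zs Z d x) : zs Z (Z.dRev x) d' := by
  refine ⟨?_, ?_⟩
  · unfold Complex.adj; rw [dHead_rev, ← h0.1, h]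
  · rw [dLet_rev]; exact gap_corner hg h1 h0.2

theorem gap_corner' {g : ℕ} (hg : 2 ≤ g) {s t y : Letter g} (h1 : gapN s t = 1)
    (h0 : gapN y t = 0) : gapN s (flp y) = 0 := by
  rw [gap_one_iff hg] at h1
  rw [gap_zero_iff] at h0 ⊢
  rw [← posArr_eq]
  have := posLv_lt t
  have := posArr_lt y
  have := posArr_lt s
  omega

theorem zs_corner' (hg : 2 ≤ g) {d d' y : Z.D} (h : Z.adj d d')
    (h1 : gapN (Z.dLet d) (Z.dLet d') = 1) (h0 : zs Z y d') : zs Z d (Z.dRev y) := by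
  refine ⟨?_, ?_⟩
  · unfold Complex.adj; rw [dTail_rev, h0.1, h]
  · rw [dLet_rev]; exact gap_corner' hg h1 h0.2

namespace Good
variable (G : Good hg Z B)
include G

theorem zsB (f : Z.F) (i : ℕ) : zs Z (B f i) (B f (i + 1)) := by
  refine ⟨G.adj f i, ?_⟩
  rw [G.lt, G.lt]
  exact rl_gap hg i

theorem congrB (f : Z.F) {i j : ℕ} (h : i % (4 * g) = j % (4 * g)) : B f i = B f j := by
  have h1 := G.get f i
  rw [h, G.get f j] at h1
  exact (Option.some.inj h1).symm

theorem injB {f f' : Z.F} {i j : ℕ} (h : B f i = B f' j) : i % (4 * g) = j % (4 * g) := by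
  have h1 := G.lt f i
  rw [h, G.lt] at h1
  exact (rl_inj hg h1).symm

theorem faceB {f f' : Z.F} {i j : ℕ} (h : B f i = B f' j) : f = f' := by
  have hm := G.injB h
  have key : ∀ n, B f (i + n) = B f' (i + n) := by
    intro n
    induction n with
    | zero => rw [Nat.add_zero, h]; exact G.congrB f' hm.symm
    | succ n ih =>
      have h1 := G.zsB f (i + n)
      have h2 := G.zsB f' (i + n)
      rw [ih] at h1
      exact zs_right G.p1 h1 h2
  apply G.inj
  apply List.ext_getElem?
  intro k
  by_cases hk : k < 4 * g
  · have e : (i + (k + (4 * g - 1) * i)) % (4 * g) = k := by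
      have : i + (k + (4 * g - 1) * i) = k + (4 * g) * i := by
        obtain ⟨m, hm⟩ : ∃ m, 4 * g = m + 1 := ⟨4 * g - 1, by omega⟩
        rw [hm]; simp; ring
      rw [this, Nat.add_mul_mod_self_left, Nat.mod_eq_of_lt hk]
    have h1 := G.get f (i + (k + (4 * g - 1) * i))
    have h2 := G.get f' (i + (k + (4 * g - 1) * i))
    rw [e] at h1 h2
    rw [h1, h2, key]
  · rw [List.getElem?_eq_none, List.getElem?_eq_none]
    · rw [G.len]; omega
    · rw [G.len]; omega

theorem mem_bdry {f : Z.F} {d : Z.D} : d ∈ Z.bdry f ↔ ∃ i, B f i = d := by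
  constructor
  · intro h
    obtain ⟨i, hi, rfl⟩ := List.getElem_of_mem h
    rw [G.len] at hi
    refine ⟨i, ?_⟩
    have := G.get f i
    rw [Nat.mod_eq_of_lt hi, List.getElem?_eq_some_iff] at this
    exact this.2.symm
  · rintro ⟨i, rfl⟩
    exact List.mem_of_getElem? (G.get f i)

theorem get2 (f : Z.F) (i : ℕ) (h : i < 8 * g) : (Z.bdry f ++ Z.bdry f)[i]? = some (B f i) := by
  rw [List.getElem?_append, G.len]
  split_ifs with h1
  · have := G.get f i
    rwa [Nat.mod_eq_of_lt h1] at this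
  · have := G.get f i
    rwa [Nat.mod_eq_sub_mod (by omega), Nat.mod_eq_of_lt (by omega)] at this

theorem faceStep_iff {sF : Set Z.F} {d d' : Z.D} :
    Z.faceStep sF d d' ↔ ∃ f ∈ sF, ∃ i, B f i = d ∧ B f (i + 1) = d' := by
  unfold Complex.faceStep
  constructor
  · rintro ⟨f, hf, h⟩
    rw [List.infix_iff_getElem?] at h
    obtain ⟨k, hk, h⟩ := h
    simp only [List.length_append, G.len, List.length_cons, List.length_nil] at hk h
    have h0 := h 0 (by omega)
    have h1 := h 1 (by omega)
    rw [G.get2 f _ (by omega)] at h0 h1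
    refine ⟨f, hf, k, ?_, ?_⟩
    · simpa using h0
    · simpa [add_comm] using h1
  · rintro ⟨f, hf, i, rfl, rfl⟩
    refine ⟨f, hf, ?_⟩
    rw [List.infix_iff_getElem?]
    have h0 : i % (4 * g) < 4 * g := Nat.mod_lt _ (by omega)
    refine ⟨i % (4 * g), ?_, ?_⟩
    · simp only [List.length_append, G.len, List.length_cons, List.length_nil]; omega
    · intro n hn
      simp only [List.length_cons, List.length_nil] at hn
      rw [G.get2 f _ (by omega)]
      have hn' : n = 0 ∨ n = 1 := by omega
      rcases hn' with rfl | rfl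
      · simp only [List.getElem_cons_zero]
        congr 1
        apply G.congrB; simp
      · simp only [List.getElem_cons_zero, List.getElem_cons_succ]
        congr 1
        apply G.congrB; simp [add_comm]

end Good

/-- The path `b` runs along the boundary of the face `f`. -/
def Fil (B : Z.F → ℕ → Z.D) (f : Z.F) (b : List Z.D) : Prop :=
  ∃ p, ∀ i (h : i < b.length), b[i] = B f (p + i)

theorem Fil.left {f : Z.F} {b c : List Z.D} (h : Fil B f (b ++ c)) : Fil B f b := by
  obtain ⟨p, h⟩ := h
  refine ⟨p, fun i hi => ?_⟩
  rw [← h i (by simp; omega), List.getElem_append_left hi]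

theorem Fil.tail {f : Z.F} {d : Z.D} {b : List Z.D} (h : Fil B f (d :: b)) : Fil B f b := by
  obtain ⟨p, h⟩ := h
  refine ⟨p + 1, fun i hi => ?_⟩
  have := h (i + 1) (by simp; omega)
  rw [List.getElem_cons_succ] at this
  rw [this]; congr 1; omega

theorem Good.fil (G : Good hg Z B) {l : List Z.D} (hl : l.IsChain (zs Z)) {i j : ℕ} {f : Z.F}
    (hi : i < l.length) (h : l[i] = B f j) : Fil B f l := by
  rw [List.isChain_iff_getElem] at hl
  have e : (j + (4 * g - 1) * i + i) % (4 * g) = j % (4 * g) := by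
    have : j + (4 * g - 1) * i + i = j + (4 * g) * i := by
      obtain ⟨m, hm⟩ : ∃ m, 4 * g = m + 1 := ⟨4 * g - 1, by omega⟩
      rw [hm]; simp; ring
    rw [this, Nat.add_mul_mod_self_left]
  set p := j + (4 * g - 1) * i with hp
  have key : ∀ n (hn : n < l.length), l[n] = B f (p + n) ↔ l[0]'(by omega) = B f p := by
    intro n
    induction n with
    | zero => intro hn; simp
    | succ n ih =>
      intro hn
      rw [← ih (by omega)]
      have h1 := hl n hn
      have h2 := G.zsB f (p + n)
      constructor
      · intro h3; rw [h3] at h1; exact zs_left G.p1 h1 h2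
      · intro h3; rw [h3] at h1; exact zs_right G.p1 h1 h2
  refine ⟨p, fun n hn => ?_⟩
  rw [key n hn, ← key i hi, h]
  exact G.congrB f e.symm

end

/-- All entries `2g-1` except the last one, which is `2g`. -/
def shapeR (g : ℕ) : List ℕ → Prop
  | [] => False
  | [a] => a = 2 * g
  | a :: b :: l => a = 2 * g - 1 ∧ shapeR g (b :: l)

/-- Lengths of a long chain, or `[2g+1]`. -/
def shape (g : ℕ) (L : List ℕ) : Prop := ∃ a l, L = (a + 1) :: l ∧ shapeR g (a :: l)

theorem shapeR_split {g : ℕ} (hg : 2 ≤ g) {l1 l2 : List ℕ} {a c : ℕ}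
    (h : shapeR g (l1 ++ a :: c :: l2)) : shapeR g (l1 ++ [a + 1]) ∧ shapeR g (c :: l2) := by
  induction l1 with
  | nil => 
    obtain ⟨h1, h2⟩ := h
    refine ⟨?_, h2⟩
    show a + 1 = 2 * g
    omega
  | cons x l1 ih =>
    cases l1 with
    | nil => 
      obtain ⟨h1, h2⟩ := h
      obtain ⟨h3, h4⟩ := ih h2
      exact ⟨⟨h1, h3⟩, h4⟩
    | cons y l1 =>
      obtain ⟨h1, h2⟩ := h
      obtain ⟨h3, h4⟩ := ih h2
      exact ⟨⟨h1, h3⟩, h4⟩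

theorem shape_split {g : ℕ} (hg : 2 ≤ g) {l1 l2 : List ℕ} {a c : ℕ}
    (h : shape g (l1 ++ a :: c :: l2)) : shape g (l1 ++ [a + 1]) ∧ shape g ((c + 1) :: l2) := by
  obtain ⟨x, l, h1, h2⟩ := h
  cases l1 with
  | nil =>
    simp only [List.nil_append, List.cons.injEq] at h1
    obtain ⟨rfl, rfl⟩ := h1
    obtain ⟨h3, h4⟩ := shapeR_split hg (l1 := []) h2
    exact ⟨⟨_, _, rfl, h3⟩, ⟨_, _, rfl, h4⟩⟩
  | cons y l1 =>
    simp only [List.cons_append, List.cons.injEq] at h1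
    obtain ⟨rfl, rfl⟩ := h1
    obtain ⟨h3, h4⟩ := shapeR_split hg (l1 := x :: l1) h2
    exact ⟨⟨_, _, rfl, h3⟩, ⟨_, _, rfl, h4⟩⟩

theorem shapeR_len {g : ℕ} (hg : 2 ≤ g) {l1 l2 : List ℕ} {a : ℕ}
    (h : shapeR g (l1 ++ a :: l2)) : a = 2 * g - 1 + if l2 = [] then 1 else 0 := by
  induction l1 with
  | nil => 
    cases l2 with
    | nil => have h : a = 2 * g := h
             simp; omega
    | cons x l2 => simpa using h.1
  | cons x l1 ih =>
    cases l1 with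
    | nil => exact ih h.2
    | cons y l1 => exact ih h.2

theorem shape_len {g : ℕ} (hg : 2 ≤ g) {l1 l2 : List ℕ} {a : ℕ}
    (h : shape g (l1 ++ a :: l2)) :
    a = 2 * g - 1 + (if l1 = [] then 1 else 0) + if l2 = [] then 1 else 0 := by
  obtain ⟨x, l, h1, h2⟩ := h
  cases l1 with
  | nil =>
    simp only [List.nil_append, List.cons.injEq] at h1
    obtain ⟨rfl, rfl⟩ := h1
    have := shapeR_len hg (l1 := []) h2
    simp; omega
  | cons y l1 =>
    simp only [List.cons_append, List.cons.injEq] at h1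
    obtain ⟨rfl, rfl⟩ := h1
    have := shapeR_len hg (l1 := x :: l1) h2
    simpa using this

theorem shapeR_rep {g : ℕ} {L : List ℕ} (h : shapeR g L) :
    ∃ k, L = List.replicate k (2 * g - 1) ++ [2 * g] := by
  induction L with
  | nil => exact h.elim
  | cons a l ih =>
    cases l with
    | nil => exact ⟨0, by have h : a = 2 * g := h; simpa using h⟩
    | cons b l =>
      obtain ⟨k, hk⟩ := ih h.2
      refine ⟨k + 1, ?_⟩
      rw [List.replicate_succ, List.cons_append, ← hk, h.1]

theorem rep_shapeR {g : ℕ} (k : ℕ) : shapeR g (List.replicate k (2 * g - 1) ++ [2 * g]) := by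
  induction k with
  | zero => rfl
  | succ k ih =>
    cases k with
    | zero => exact ⟨rfl, ih⟩
    | succ k => exact ⟨rfl, ih⟩

theorem shape_cases {g : ℕ} (hg : 2 ≤ g) {L : List ℕ} (h : shape g L) :
    L = [2 * g + 1] ∨ ∃ k, L = 2 * g :: (List.replicate k (2 * g - 1) ++ [2 * g]) := by
  obtain ⟨a, l, rfl, h⟩ := h
  obtain ⟨k, hk⟩ := shapeR_rep h
  cases k with
  | zero => left; simpa using hk
  | succ k =>
    right
    rw [List.replicate_succ, List.cons_append, List.cons.injEq] at hk
    refine ⟨k, ?_⟩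
    rw [hk.2, hk.1]; congr 1; omega

theorem shape_of_long {g : ℕ} (hg : 2 ≤ g) (k : ℕ) :
    shape g (2 * g :: (List.replicate k (2 * g - 1) ++ [2 * g])) :=
  ⟨2 * g - 1, _, by congr 1; omega, rep_shapeR (k + 1)⟩

section
variable {g : ℕ} {hg : 0 < g} {Z : Complex g} {B : Z.F → ℕ → Z.D}

theorem Good.bStep_of_zs (G : Good hg Z B) {d d' : Z.D} (h : zs Z d d')
    (hn : ∀ f i, B f i ≠ d) : Z.bStep Set.univ Set.univ d d' := by
  refine ⟨trivial, ⟨trivial, h.1, fun d'' _ _ => ?_⟩, ?_⟩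
  · rw [h.2]; exact Nat.zero_le _
  · rw [G.faceStep_iff]
    rintro ⟨f, -, i, h1, -⟩
    exact hn f i h1

theorem Good.block_unfil (G : Good hg Z B) {b : List Z.D} (hb : Z.IsBlock b)
    (hn : ∀ f, ¬ Fil B f b) : b.IsChain (Z.bStep Set.univ Set.univ) := by
  have hc : b.IsChain (zs Z) := hb.2.2
  refine hc.imp_of_mem_imp ?_
  intro x y hx _ hxy
  refine G.bStep_of_zs hxy ?_
  rintro f i rfl
  obtain ⟨n, hn', h⟩ := List.getElem_of_mem hx
  exact hn f (G.fil hc hn' h)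

theorem Fil.next (G : Good hg Z B) {f : Z.F} {b : List Z.D} (h : Fil B f b) {d : Z.D}
    (hd : b.getLast? = some d) : ∃ x ∈ Z.bdry f, zs Z d x := by
  obtain ⟨p, h⟩ := h
  rw [List.getLast?_eq_getElem?, List.getElem?_eq_some_iff] at hd
  obtain ⟨h1, rfl⟩ := hd
  rw [h _ h1]
  exact ⟨_, G.mem_bdry.2 ⟨_, rfl⟩, G.zsB f _⟩

theorem Fil.prev (G : Good hg Z B) {f : Z.F} {b : List Z.D} (h : Fil B f b) {d : Z.D}
    (hd : b.head? = some d) : ∃ x ∈ Z.bdry f, zs Z x d := by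
  obtain ⟨p, h⟩ := h
  rw [List.head?_eq_getElem?, List.getElem?_eq_some_iff] at hd
  obtain ⟨h1, rfl⟩ := hd
  rw [h _ h1]
  refine ⟨B f (p + 4 * g - 1), G.mem_bdry.2 ⟨_, rfl⟩, ?_⟩
  have := G.zsB f (p + 4 * g - 1)
  rwa [G.congrB f (i := p + 4 * g - 1 + 1) (j := p + 0)] at this
  rw [Nat.sub_add_cancel (by omega)]; simp

theorem block_app {b : List Z.D} {d x : Z.D} (hb : Z.IsBlock b) (hl : b.length + 1 ≤ 4 * g)
    (hd : b.getLast? = some d) (hx : zs Z d x) : Z.IsBlock (b ++ [x]) := by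
  have hc : b.IsChain (zs Z) := hb.2.2
  refine ⟨by simp, by simpa using hl, ?_⟩
  show (b ++ [x]).IsChain (zs Z)
  rw [List.isChain_append]
  refine ⟨hc, by simp, ?_⟩
  simp [hd, hx]

theorem block_cons {b : List Z.D} {d x : Z.D} (hb : Z.IsBlock b) (hl : b.length + 1 ≤ 4 * g)
    (hd : b.head? = some d) (hx : zs Z x d) : Z.IsBlock (x :: b) := by
  have hc : b.IsChain (zs Z) := hb.2.2
  refine ⟨by simp, by simpa using hl, ?_⟩
  show (x :: b).IsChain (zs Z)
  rw [List.isChain_cons]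
  refine ⟨?_, hc⟩
  simp [hd, hx]

theorem all_fil (hg2 : 2 ≤ g) (G : Good hg Z B) (hbr : Z.BoundaryReduced Set.univ Set.univ) (n : ℕ) :
    ∀ bs : List (List Z.D), bs.length ≤ n → Z.IsChain bs → shape g (bs.map List.length) →
      ∀ b ∈ bs, ∃ f, Fil B f b := by
  induction n with
  | zero => 
    intro bs hn hc
    exact absurd (List.length_eq_zero_iff.1 (Nat.le_zero.1 hn)) hc.1
  | succ n ih =>
    intro bs hn hc hs
    obtain ⟨hne, hbl, hch⟩ := hc
    have hch : bs.IsChain Z.chainStep := hch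
    by_cases hopen : bs.IsChain (fun b _ => ∀ d, b.getLast? = some d → ∀ x, ¬ zs Z d x)
    · -- no edges at the junctions
      by_cases hall : ∀ b ∈ bs, ∀ f, ¬ Fil B f b
      · exfalso
        have hbp : Z.BPath Set.univ Set.univ bs.flatten := by
          refine ⟨?_, fun _ _ => trivial, ?_⟩
          · cases bs with
            | nil => exact absurd rfl hne
            | cons b bs =>
              have := (hbl b (by simp)).1
              simp [this]
          · show bs.flatten.IsChain _
            rw [List.isChain_flatten (fun h => (hbl [] h).1 rfl)]
            refine ⟨fun b hb => G.block_unfil (hbl b hb) (hall b hb), ?_⟩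
            rw [List.isChain_iff_forall_rel_of_append_cons_cons] at hch hopen ⊢
            intro b b' l1 l2 e d hd d' hd'
            obtain ⟨x, x', h1, h2, h3, h4⟩ := hch e
            have ho := hopen e d hd
            have hd : b.getLast? = some d := hd
            have hd' : b'.head? = some d' := hd'
            rw [h1] at hd
            rw [h2] at hd'
            obtain rfl := Option.some.inj hd
            obtain rfl := Option.some.inj hd'
            refine ⟨trivial, ⟨trivial, h3, ?_⟩, ?_⟩
            · intro d'' _ h5
              rw [h4]
              by_contra h6
              exact ho d'' ⟨h5, by omega⟩
            · rw [G.faceStep_iff]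
              rintro ⟨f, -, i, rfl, rfl⟩
              exact ho _ (G.zsB f i)
        rcases shape_cases hg2 hs with h | h
        · cases bs with
          | nil => exact absurd rfl hne
          | cons b bs =>
            simp only [List.map_cons, List.cons.injEq, List.map_eq_nil_iff] at h
            obtain ⟨h1, rfl⟩ := h
            refine hbr.1 b (by simpa using hbp) ⟨hbl b (by simp), by omega⟩
        · exact hbr.2 bs ⟨⟨hne, hbl, hch⟩, h⟩ hbp
      · push Not at hall
        obtain ⟨b, hb, f, hf⟩ := hall
        obtain ⟨l1, l2, rfl⟩ := List.append_of_mem hb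
        rw [List.isChain_iff_forall_rel_of_append_cons_cons] at hch hopen
        have h2 : l2 = [] := by
          cases l2 with
          | nil => rfl
          | cons b' l2 =>
            exfalso
            obtain ⟨x, x', h1, h2, h3, h4⟩ := hch rfl
            obtain ⟨y, -, hy⟩ := hf.next G h1
            exact hopen rfl x h1 y hy
        have h1 : l1 = [] := by
          rcases List.eq_nil_or_concat l1 with h | ⟨l1, b', rfl⟩
          · exact h
          · exfalso
            have e : l1.concat b' ++ b :: l2 = l1 ++ b' :: b :: l2 := by simp
            obtain ⟨x, x', h1, h2, h3, h4⟩ := hch e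
            obtain ⟨y, -, hy⟩ := hf.prev G h2
            exact hopen e x h1 _ (zs_corner' hg2 h3 h4 hy)
        subst h1 h2
        intro c hc
        simp at hc
        subst hc
        exact ⟨f, hf⟩
    · rw [List.isChain_iff_forall_rel_of_append_cons_cons] at hopen
      push Not at hopen
      obtain ⟨b, b', l1, l2, rfl, d, hd, x, hx⟩ := hopen
      rw [List.isChain_append_cons_cons] at hch
      obtain ⟨hc1, hc2, hc3⟩ := hch
      obtain ⟨x0, d', h1, h2, h3, h4⟩ := hc2
      rw [hd] at h1
      obtain rfl := Option.some.inj h1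
      have hy := zs_corner hg2 h3 h4 hx
      rw [List.map_append, List.map_cons, List.map_cons] at hs
      obtain ⟨hs1, hs2⟩ := shape_split hg2 hs
      have hL1 := shape_len hg2 hs1
      have hL2 := shape_len hg2 (l1 := []) hs2
      have hbb := block_app (hbl b (by simp)) (by split_ifs at hL1 <;> omega) hd hx
      have hbb' := block_cons (hbl b' (by simp)) (by split_ifs at hL2 <;> omega) h2 hy
      have ihL := ih (l1 ++ [b ++ [x]]) (by simp at hn ⊢; omega) ⟨by simp, ?_, ?_⟩
        (by simpa using hs1)
      have ihR := ih ((Z.dRev x :: b') :: l2) (by simp at hn ⊢; omega) ⟨by simp, ?_, ?_⟩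
        (by simpa using hs2)
      · intro c hc
        simp only [List.mem_append, List.mem_cons] at hc
        rcases hc with hc | rfl | rfl | hc
        · exact ihL c (by simp [hc])
        · obtain ⟨f, hf⟩ := ihL (c ++ [x]) (by simp)
          exact ⟨f, hf.left⟩
        · obtain ⟨f, hf⟩ := ihR (Z.dRev x :: c) (by simp)
          exact ⟨f, hf.tail⟩
        · exact ihR c (by simp [hc])
      · intro c hc
        simp only [List.mem_cons] at hc
        rcases hc with rfl | hc
        · exact hbb'
        · exact hbl c (by simp [hc])
      · show List.IsChain _ _
        rw [List.isChain_cons] at hc3 ⊢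
        refine ⟨?_, hc3.2⟩
        intro y hy
        obtain ⟨u, u', a1, a2, a3⟩ := hc3.1 y hy
        exact ⟨u, u', by simp [List.getLast?_cons, a1], a2, a3⟩
      · intro c hc
        simp only [List.mem_append, List.mem_cons, List.not_mem_nil, or_false] at hc
        rcases hc with hc | rfl
        · exact hbl c (by simp [hc])
        · exact hbb
      · show List.IsChain _ _
        rw [List.isChain_append] at hc1 ⊢
        refine ⟨hc1.1, by simp, ?_⟩
        intro y hy z hz
        simp at hz
        subst hz
        obtain ⟨u, u', a1, a2, a3⟩ := hc1.2.2 y hy b (by simp)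
        exact ⟨u, u', a1, by simp [List.head?_append, a2], a3⟩

end

section
variable {g : ℕ} {hg : 0 < g} {Z : Complex g} {B : Z.F → ℕ → Z.D}

theorem Good.count (G : Good hg Z B) {f : Z.F} {X : Finset Z.D} {s M : ℕ} (hM : M ≤ 4 * g)
    (h : ∀ j < M, B f (s + j) ∈ X) : M ≤ X.card := by
  have := Finset.card_le_card_of_injOn (s := Finset.range M) (t := X) (fun j => B f (s + j))
    (fun j hj => h j (by simpa using hj)) ?_
  · simpa using this
  · intro i hi j hj e
    simp only [Finset.coe_range, Set.mem_Iio] at hi hj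
    have h1 : (s + i) ≡ (s + j) [MOD (4 * g)] := G.injB e
    have h2 := Nat.ModEq.add_left_cancel' s h1
    have h3 : i % (4 * g) = j % (4 * g) := h2
    rwa [Nat.mod_eq_of_lt (by omega), Nat.mod_eq_of_lt (by omega)] at h3

theorem Fil.unique (G : Good hg Z B) {f f' : Z.F} {b : List Z.D} (hb : b ≠ []) (h : Fil B f b)
    (h' : Fil B f' b) : f = f' := by
  obtain ⟨p, h⟩ := h
  obtain ⟨p', h'⟩ := h'
  have hl : 0 < b.length := List.length_pos_iff.2 hb
  have h1 := h 0 hl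
  rw [h' 0 hl] at h1
  exact (G.faceB h1).symm

theorem Good.face_unique (G : Good hg Z B) {f f' : Z.F} {d : Z.D} (h : d ∈ Z.bdry f)
    (h' : d ∈ Z.bdry f') : f = f' := by
  rw [G.mem_bdry] at h h'
  obtain ⟨i, rfl⟩ := h
  obtain ⟨j, h'⟩ := h'
  exact (G.faceB h').symm

/-- boundary darts -/
def bdD (T : SubC Z) : Set Z.D := {d | d.1 ∈ T.sE ∧ ∀ f ∈ T.sF, d ∉ Z.bdry f}

theorem bdD_finite {T : SubC Z} (h : T.Compact) : (bdD T).Finite := by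
  have : (T.sE ×ˢ (Set.univ : Set Bool)).Finite := h.2.1.prod Set.finite_univ
  refine this.subset ?_
  rintro d ⟨hd, -⟩
  exact ⟨hd, trivial⟩

/-- adding faces -/
def addF (T : SubC Z) (N : Set Z.F) : SubC Z where
  sV := T.sV ∪ (Z.src '' {e | ∃ f ∈ N, ∃ d ∈ Z.bdry f, d.1 = e} ∪
    Z.dst '' {e | ∃ f ∈ N, ∃ d ∈ Z.bdry f, d.1 = e})
  sE := T.sE ∪ {e | ∃ f ∈ N, ∃ d ∈ Z.bdry f, d.1 = e}
  sF := T.sF ∪ N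

theorem addF_sub {T : SubC Z} (hT : T.IsSub) (N : Set Z.F) : (addF T N).IsSub := by
  constructor
  · rintro e (he | he)
    · exact ⟨Or.inl (hT.1 e he).1, Or.inl (hT.1 e he).2⟩
    · exact ⟨Or.inr (Or.inl ⟨e, he, rfl⟩), Or.inr (Or.inr ⟨e, he, rfl⟩)⟩
  · rintro f (hf | hf) d hd
    · exact Or.inl (hT.2 f hf d hd)
    · exact Or.inr ⟨f, hf, d, hd, rfl⟩

theorem addF_compact {T : SubC Z} (hT : T.Compact) {N : Set Z.F} (hN : N.Finite) :
    (addF T N).Compact := by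
  have h : {e | ∃ f ∈ N, ∃ d ∈ Z.bdry f, d.1 = e}.Finite := by
    have : (⋃ f ∈ N, Prod.fst '' {d | d ∈ Z.bdry f}).Finite :=
      hN.biUnion fun f _ => (List.finite_toSet (Z.bdry f)).image _
    refine this.subset ?_
    rintro e ⟨f, hf, d, hd, rfl⟩
    simp only [Set.mem_iUnion]
    exact ⟨f, hf, d, hd, rfl⟩
  exact ⟨hT.1.union ((h.image _).union (h.image _)), hT.2.1.union h, hT.2.2.union hN⟩

open Classical in
theorem addF_lt (G : Good hg Z B) {T : SubC Z} (hc : T.Compact) (N : Finset Z.F)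
    (hN : ∀ f ∈ N, f ∉ T.sF) (U P : Z.F → Finset Z.D)
    (hU : ∀ f ∈ N, ∀ d, d ∈ U f ↔ d ∈ Z.bdry f ∧ d.1 ∉ T.sE ∧ ∀ f' ∈ N, Z.dRev d ∉ Z.bdry f')
    (hP : ∀ f ∈ N, ∀ d, d ∈ P f ↔ d ∈ Z.bdry f ∧ d.1 ∈ T.sE)
    (hle : ∀ f ∈ N, (U f).card ≤ (P f).card) (hlt : ∃ f ∈ N, (U f).card < (P f).card) :
    (bdD (addF T N)).ncard < (bdD T).ncard := by
  have h1 : (N.biUnion U).card < (N.biUnion P).card := by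
    refine lt_of_le_of_lt Finset.card_biUnion_le ?_
    rw [Finset.card_biUnion]
    · exact Finset.sum_lt_sum hle hlt
    · intro f hf f' hf' hne
      show Disjoint (P f) (P f')
      rw [Finset.disjoint_left]
      intro d hd hd'
      exact hne (G.face_unique ((hP f hf d).1 hd).1 ((hP f' hf' d).1 hd').1)
  have hfin := bdD_finite hc
  have hPA : (↑(N.biUnion P) : Set Z.D) ⊆ bdD T := by
    intro d hd
    simp only [Finset.coe_biUnion, Set.mem_iUnion, Finset.mem_coe] at hd
    obtain ⟨f, hf, hd⟩ := hd
    rw [hP f hf] at hd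
    refine ⟨hd.2, fun f' hf' hd' => ?_⟩
    rw [G.face_unique hd' hd.1] at hf'
    exact hN f hf hf'
  have hsub : bdD (addF T N) ⊆
      (bdD T \ ↑(N.biUnion P)) ∪ ↑((N.biUnion U).image Z.dRev) := by
    rintro d ⟨hd, hdf⟩
    have hdN : ∀ f ∈ N, d ∉ Z.bdry f := fun f hf => hdf f (Or.inr hf)
    by_cases hE : d.1 ∈ T.sE
    · left
      refine ⟨⟨hE, fun f hf => hdf f (Or.inl hf)⟩, ?_⟩
      simp only [Finset.coe_biUnion, Set.mem_iUnion, Finset.mem_coe, not_exists]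
      intro f hf h
      exact hdN f hf ((hP f hf d).1 h).1
    · right
      rcases hd with hd | ⟨f, hf, d', hd', he⟩
      · exact absurd hd hE
      · have hr : d' = Z.dRev d := by
          obtain ⟨e, b⟩ := d
          obtain ⟨e', b'⟩ := d'
          simp only at he
          subst he
          cases b <;> cases b'
          · exact absurd hd' (hdN f hf)
          · rfl
          · rfl
          · exact absurd hd' (hdN f hf)
        rw [Finset.mem_coe, Finset.mem_image]
        refine ⟨d', ?_, by rw [hr, rev_rev]⟩
        rw [Finset.mem_biUnion]
        refine ⟨f, hf, (hU f hf d').2 ⟨hd', by rw [he]; exact hE, ?_⟩⟩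
        rw [hr, rev_rev]
        exact hdN
  have h2 := Set.ncard_le_ncard hsub ((hfin.subset Set.diff_subset).union (Finset.finite_toSet _))
  have h3 := Set.ncard_union_le (bdD T \ ↑(N.biUnion P)) (↑((N.biUnion U).image Z.dRev) : Set Z.D)
  have h4 := Set.ncard_diff_add_ncard_of_subset hPA hfin
  rw [Set.ncard_coe_finset] at h3 h4
  have h5 := Finset.card_image_le (s := N.biUnion U) (f := Z.dRev)
  omega

open Classical in
theorem decrease (hg2 : 2 ≤ g) (G : Good hg Z B) (hbr : Z.BoundaryReduced Set.univ Set.univ)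
    {T : SubC Z} (hT : T.IsSub) (hc : T.Compact) {bs : List (List Z.D)} (hch : Z.IsChain bs)
    (hs : shape g (bs.map List.length)) (hbp : Z.BPath T.sE T.sF bs.flatten) :
    ∃ T' : SubC Z, T'.IsSub ∧ T.le T' ∧ T'.Compact ∧ (bdD T').ncard < (bdD T).ncard := by
  have hfil := all_fil hg2 G hbr bs.length bs le_rfl hch hs
  obtain ⟨hne, hbl, hch⟩ := hch
  have hch : bs.IsChain Z.chainStep := hch
  obtain ⟨-, hin, hst⟩ := hbp
  have hst : bs.flatten.IsChain (Z.bStep T.sE T.sF) := hst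
  rw [List.isChain_flatten (fun h => (hbl [] h).1 rfl)] at hst
  have hNfin : {f | ∃ b ∈ bs, Fil B f b}.Finite := by
    have : (⋃ b ∈ {b | b ∈ bs}, {f | Fil B f b}).Finite := by
      refine (List.finite_toSet bs).biUnion fun b hb => Set.Subsingleton.finite ?_
      intro f hf f' hf'
      exact Fil.unique G (hbl b hb).1 hf hf'
    refine this.subset ?_
    rintro f ⟨b, hb, hf⟩
    simp only [Set.mem_iUnion]
    exact ⟨b, hb, hf⟩
  set N := hNfin.toFinset with hNdef
  have hmN : ∀ f, f ∈ N ↔ ∃ b ∈ bs, Fil B f b := by intro f; simp [hNdef]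
  let U : Z.F → Finset Z.D := fun f => (Z.bdry f).toFinset.filter
    (fun d => d.1 ∉ T.sE ∧ ∀ f' ∈ N, Z.dRev d ∉ Z.bdry f')
  let P : Z.F → Finset Z.D := fun f => (Z.bdry f).toFinset.filter (fun d => d.1 ∈ T.sE)
  -- the count around one face
  have key : ∀ f l1 b l2, bs = l1 ++ b :: l2 → Fil B f b →
      (U f).card ≤ 2 * g - 1 ∧ b.length ≤ (P f).card := by
    intro f l1 b l2 e hf
    have hb : b ∈ bs := by rw [e]; simp
    have hL : b.length = 2 * g - 1 + (if l1 = [] then 1 else 0) + if l2 = [] then 1 else 0 := by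
      rw [e, List.map_append, List.map_cons] at hs
      have := shape_len hg2 hs
      simpa using this
    have hLpos : 0 < b.length := by omega
    obtain ⟨p, hp⟩ := id hf
    have hbE : ∀ j < b.length, (B f (p + j)).1 ∈ T.sE := by
      intro j hj
      rw [← hp j hj]
      exact hin _ (List.mem_flatten.2 ⟨b, hb, List.getElem_mem hj⟩)
    have hmem : ∀ i, B f i ∈ (Z.bdry f).toFinset := fun i => by
      rw [List.mem_toFinset]; exact G.mem_bdry.2 ⟨i, rfl⟩
    have hlast : b.getLast? = some (B f (p + (b.length - 1))) := by
      rw [List.getLast?_eq_getElem?, List.getElem?_eq_some_iff]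
      exact ⟨by omega, hp _ _⟩
    have hhead : b.head? = some (B f p) := by
      rw [List.head?_eq_getElem?, List.getElem?_eq_some_iff]
      exact ⟨by omega, hp 0 _⟩
    have hx : l2 ≠ [] → B f (p + b.length) ∉ U f := by
      intro h
      cases l2 with
      | nil => exact absurd rfl h
      | cons b' l2 =>
        rw [e, List.isChain_append_cons_cons] at hch
        obtain ⟨-, ⟨u, u', a1, a2, a3, a4⟩, -⟩ := hch
        rw [hlast] at a1
        obtain rfl := Option.some.inj a1
        have hb' : b' ∈ bs := by rw [e]; simp
        obtain ⟨f', hf'⟩ := hfil b' hb'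
        obtain ⟨y, hy1, hy2⟩ := hf'.prev G a2
        have h5 := zs_corner' hg2 a3 a4 hy2
        have h6 := G.zsB f (p + (b.length - 1))
        rw [show p + (b.length - 1) + 1 = p + b.length by omega] at h6
        rw [zs_right G.p1 h6 h5]
        intro hU
        simp only [U, Finset.mem_filter] at hU
        refine hU.2.2 f' ((hmN f').2 ⟨b', hb', hf'⟩) ?_
        rw [rev_rev]; exact hy1
    have hy : l1 ≠ [] → B f (p + 4 * g - 1) ∉ U f := by
      intro h
      rcases List.eq_nil_or_concat l1 with h' | ⟨l1, b', rfl⟩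
      · exact absurd h' h
      · rw [List.concat_eq_append, List.append_assoc, List.singleton_append] at e
        rw [e, List.isChain_append_cons_cons] at hch
        obtain ⟨-, ⟨u, u', a1, a2, a3, a4⟩, -⟩ := hch
        rw [hhead] at a2
        obtain rfl := Option.some.inj a2
        have hb' : b' ∈ bs := by rw [e]; simp
        obtain ⟨f', hf'⟩ := hfil b' hb'
        obtain ⟨y, hy1, hy2⟩ := hf'.next G a1
        have h5 := zs_corner hg2 a3 a4 hy2
        have h6 := G.zsB f (p + 4 * g - 1)
        rw [G.congrB f (i := p + 4 * g - 1 + 1) (j := p)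
          (by rw [Nat.sub_add_cancel (by omega)]; simp)] at h6
        rw [zs_left G.p1 h6 h5]
        intro hU
        simp only [U, Finset.mem_filter] at hU
        refine hU.2.2 f' ((hmN f').2 ⟨b', hb', hf'⟩) ?_
        rw [rev_rev]; exact hy1
    refine ⟨?_, ?_⟩
    · obtain ⟨a, ha⟩ : ∃ a, a = if l1 = [] then 0 else 1 := ⟨_, rfl⟩
      obtain ⟨c, hc'⟩ : ∃ c, c = if l2 = [] then 0 else 1 := ⟨_, rfl⟩
      have hM : a + b.length + c = 2 * g + 1 := by
        split_ifs at ha hc' hL <;> omega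
      have ha1 : a ≤ 1 := by split_ifs at ha <;> omega
      have hcnt : 2 * g + 1 ≤ ((Z.bdry f).toFinset \ U f).card := by
        refine G.count (f := f) (s := p + 4 * g - a) (by omega) ?_
        intro j hj
        rw [Finset.mem_sdiff]
        refine ⟨hmem _, ?_⟩
        by_cases h1 : j < a
        · have hl1 : l1 ≠ [] := by rintro rfl; simp at ha; omega
          have : p + 4 * g - a + j = p + 4 * g - 1 := by omega
          rw [this]; exact hy hl1
        · by_cases h2 : j < a + b.length
          · have : B f (p + 4 * g - a + j) = B f (p + (j - a)) := by
              apply G.congrB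
              rw [show p + 4 * g - a + j = p + (j - a) + 4 * g by omega, Nat.add_mod_right]
            rw [this]
            intro hU
            simp only [U, Finset.mem_filter] at hU
            exact hU.2.1 (hbE _ (by omega))
          · have hl2 : l2 ≠ [] := by rintro rfl; simp at hc'; omega
            have hc1 : c = 1 := by simpa [hl2] using hc'
            have : B f (p + 4 * g - a + j) = B f (p + b.length) := by
              apply G.congrB
              rw [show p + 4 * g - a + j = p + b.length + 4 * g by omega, Nat.add_mod_right]
            rw [this]; exact hx hl2
      have hsubU : U f ⊆ (Z.bdry f).toFinset := Finset.filter_subset _ _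
      have h7 := Finset.card_sdiff_add_card_eq_card hsubU
      have h8 := List.toFinset_card_le (Z.bdry f)
      rw [G.len] at h8
      omega
    · refine G.count (f := f) (s := p) (hbl b hb).2.1 ?_
      intro j hj
      simp only [P, Finset.mem_filter]
      exact ⟨hmem _, hbE j hj⟩
  have hlen : ∀ b ∈ bs, 2 * g - 1 ≤ b.length := by
    intro b hb
    obtain ⟨l1, l2, e⟩ := List.append_of_mem hb
    rw [e, List.map_append, List.map_cons] at hs
    have := shape_len hg2 hs
    omega
  refine ⟨addF T N, addF_sub hT _, ⟨Set.subset_union_left, Set.subset_union_left,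
    Set.subset_union_left⟩, addF_compact hc (Finset.finite_toSet N), ?_⟩
  refine addF_lt G hc N ?_ U P ?_ ?_ ?_ ?_
  · intro f hf hfT
    obtain ⟨b, hb, p, hp⟩ := (hmN f).1 hf
    have h1 := hst.1 b hb
    have h2 := hlen b hb
    rw [List.isChain_iff_getElem] at h1
    refine (h1 0 (by omega)).2.2 ?_
    rw [G.faceStep_iff]
    exact ⟨f, hfT, p, (hp 0 (by omega)).symm, (hp 1 (by omega)).symm⟩
  · intro f _ d; simp [U]
  · intro f _ d; simp [P]
  · intro f hf
    obtain ⟨b, hb, hfb⟩ := (hmN f).1 hf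
    obtain ⟨l1, l2, e⟩ := List.append_of_mem hb
    have h1 := key f l1 b l2 e hfb
    have h2 := hlen b hb
    omega
  · cases bs with
    | nil => exact absurd rfl hne
    | cons b l2 =>
      obtain ⟨f, hf⟩ := hfil b (by simp)
      refine ⟨f, (hmN f).2 ⟨b, by simp, hf⟩, ?_⟩
      have h1 := key f [] b l2 rfl hf
      have hL := shape_len hg2 (l1 := []) hs
      simp only [if_true] at hL
      omega

theorem not_br (hg2 : 2 ≤ g) {sE : Set Z.E} {sF : Set Z.F} (h : ¬ Z.BoundaryReduced sE sF) :
    ∃ bs, Z.IsChain bs ∧ shape g (bs.map List.length) ∧ Z.BPath sE sF bs.flatten := by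
  unfold Complex.BoundaryReduced at h
  rw [not_and_or] at h
  rcases h with h | h
  · push Not at h
    obtain ⟨l, ⟨h1, h2, h3⟩, ⟨h4, h5, h6⟩, h7⟩ := h
    have hne : l.take (2 * g + 1) ≠ [] := by
      intro h
      have := congrArg List.length h
      rw [List.length_take, List.length_nil] at this
      omega
    refine ⟨[l.take (2 * g + 1)], ⟨by simp, ?_, List.isChain_singleton _⟩, ?_, ?_⟩
    · intro b hb
      rw [List.mem_singleton] at hb
      subst hb
      refine ⟨hne, by rw [List.length_take]; omega, ?_⟩
      exact List.IsChain.infix h6 (List.take_prefix _ _).isInfix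
    · refine ⟨2 * g, [], ?_, rfl⟩
      simp; omega
    · simp only [List.flatten_cons, List.flatten_nil, List.append_nil]
      refine ⟨hne, fun d hd => h2 d (List.mem_of_mem_take hd), ?_⟩
      exact List.IsChain.infix h3 (List.take_prefix _ _).isInfix
  · push Not at h
    obtain ⟨bs, ⟨h1, k, h2⟩, h3⟩ := h
    exact ⟨bs, h1, by rw [h2]; exact shape_of_long hg2 k, h3⟩

theorem exists_br (hg2 : 2 ≤ g) (G : Good hg Z B) (hbr : Z.BoundaryReduced Set.univ Set.univ)
    (n : ℕ) : ∀ T : SubC Z, T.IsSub → T.Compact → (bdD T).ncard ≤ n →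
      ∃ T' : SubC Z, T'.IsSub ∧ T.le T' ∧ T'.Compact ∧ Z.BoundaryReduced T'.sE T'.sF := by
  induction n with
  | zero =>
    intro T hT hc hn
    refine ⟨T, hT, ⟨subset_rfl, subset_rfl, subset_rfl⟩, hc, ?_⟩
    by_contra hnb
    obtain ⟨bs, h1, h2, h3⟩ := not_br hg2 hnb
    obtain ⟨T', -, -, -, h⟩ := decrease hg2 G hbr hT hc h1 h2 h3
    omega
  | succ n ih =>
    intro T hT hc hn
    by_cases hnb : Z.BoundaryReduced T.sE T.sF
    · exact ⟨T, hT, ⟨subset_rfl, subset_rfl, subset_rfl⟩, hc, hnb⟩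
    · obtain ⟨bs, h1, h2, h3⟩ := not_br hg2 hnb
      obtain ⟨T', a1, a2, a3, h⟩ := decrease hg2 G hbr hT hc h1 h2 h3
      obtain ⟨T'', b1, b2, b3, b4⟩ := ih T' a1 a3 (by omega)
      exact ⟨T'', b1, ⟨a2.1.trans b2.1, a2.2.1.trans b2.2.1, a2.2.2.trans b2.2.2⟩, b3, b4⟩

end

end Pf

/-- Let `Y` (= `S`) be a compact tiled surface embedded in a
boundary reduced tiled surface `Z`.  Then the BR-closure `BR(Y ↪ Z)` is compact. -/
theorem statement_4 (g : ℕ) (hg : 2 ≤ g) (Z : Complex g) (hZ : Z.IsTiledSurface)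
    (hbr : Z.BoundaryReduced Set.univ Set.univ)
    (S : SubC Z) (hS : S.IsSub) (hc : S.Compact) :
    (BRcl Z S).Compact := by
  have hg0 : 0 < g := by omega
  obtain ⟨B, G⟩ := Pf.good_exists hg0 Z hZ
  obtain ⟨T, h1, h2, h3, h4⟩ := Pf.exists_br hg G hbr _ S hS hc le_rfl
  refine ⟨h3.1.subset ?_, h3.2.1.subset ?_, h3.2.2.subset ?_⟩
  · exact Set.biInter_subset_of_mem (show T ∈ {T : SubC Z | T.IsSub ∧ S.le T ∧ Z.BoundaryReduced T.sE T.sF} from ⟨h1, h2, h4⟩)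
  · exact Set.biInter_subset_of_mem (show T ∈ {T : SubC Z | T.IsSub ∧ S.le T ∧ Z.BoundaryReduced T.sE T.sF} from ⟨h1, h2, h4⟩)
  · exact Set.biInter_subset_of_mem (show T ∈ {T : SubC Z | T.IsSub ∧ S.le T ∧ Z.BoundaryReduced T.sE T.sF} from ⟨h1, h2, h4⟩)

end CS

end
end
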